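/- arXiv:2511.13537 — 3 statements merged into one kernel-verified Lean document; each statement's English description precedes it below -/
import Mathlib

section
/- Throughout, $\dim$ of a subset of $\mathbb{R}^n$ is the dimension of its affine span, with $\dim\emptyset=-1$. Let $n\ge 1$ and let $\ell_1,\dots,\ell_d\in\mathbb{R}[X_0,\dots,X_n]$ be pairwise non-proportional nonzero homogeneous polynomials of degree $1$ such that $P=\{y\in\mathbb{R}^n:\ell_i(1,y)\ge 0\text{ for all }i\}$ is compact, the affine span of $P$ is $\mathbb{R}^n$, and for each $i$ the facet $F_i=\{y\in P:\ell_i(1,y)=0\}$ satisfies $\dim F_i=n-1$. For $i\ne j$ call $F_i$ and $F_j$ incident if $\dim(F_i\cap F_j)=n-2$ (so the two endpoints of a segment, $n=1$, are incident). For a nonzero $v\in\mathbb{C}^{n+1}$ let $I_v\subseteq\mathbb{C}[X_0,\dots,X_n]$ be the ideal generated by the homogeneous polynomials of degree $1$ vanishing at $v$, let $\mathcal F_v=\{i:\ell_i(v)=0\}$, let $r_v$ be the dimension of the real linear span of $\{\ell_i:i\in\mathcal F_v\}$, and let $P_v=\{y\in P:\ell_i(1,y)=0\text{ for all }i\in\mathcal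 F_v\}$. Set $$\operatorname{ord}_P(L_v)=\begin{cases}|\mathcal F_v|-r_v&\text{if }\dim P_v=n-r_v,\\ |\mathcal F_v|-r_v+1&\text{otherwise.}\end{cases}$$ Fix $i_0\in\{1,\dots,d\}$. For a nonzero $v\in\mathbb{C}^{n+1}$ with $\ell_{i_0}(v)=0$ let $\mathcal F'_v=\{j\ne i_0: F_j\text{ is incident to }F_{i_0}\text{ and }\ell_j(v)=0\}$, let $r'_v+1$ be the dimension of the real linear span of $\{\ell_{i_0}\}\cup\{\ell_j:j\in\mathcal F'_v\}$, and let $P'_v=\{y\in F_{i_0}:\ell_j(1,y)=0\text{ for all }j\in\mathcal F'_v\}$. Set $$\operatorname{ord}_{P'}(L'_v)=\begin{cases}|\mathcal F'_v|-r'_v&\text{if }\dim P'_v=(n-1)-r'_v,\\ |\mathcal F'_v|-r'_v+1&\text{otherwise;}\end{cases}$$ this is the order defined above, taken for the facet $P'=F_{i_0}$ as an $(n-1)$-dimensional polytope in the hyperplane $\{\ell_{i_0}=0\}$. Let $f\in\mathbb{C}[X_0,\dots,X_n]$ be a nonzero homogeneous polynomial of degree $d-n-1$ such that $f\in I_v^{\operatorname{ord}_P(L_v)}$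 for every nonzero $v\in\mathbb{R}^{n+1}$. Let $N$ be the set of indices $j\ne i_0$ such that $F_j$ is not incident to $F_{i_0}$, and set $d'=d-1-|N|$. Then there exists a homogeneous polynomial $g\in\mathbb{C}[X_0,\dots,X_n]$ of degree $d'-n$, not divisible by $\ell_{i_0}$, such that $\ell_{i_0}$ divides $f-g\cdot\prod_{j\in N}\ell_j$, and such that for every nonzero $v\in\mathbb{C}^{n+1}$ with $\ell_{i_0}(v)=0$ the restriction of $g$ to the hyperplane $\{\ell_{i_0}=0\}$ vanishes at $v$ to order at least $\operatorname{ord}_{P'}(L'_v)$, i.e. the class of $g$ in $\mathbb{C}[X_0,\dots,X_n]/(\ell_{i_0})$ lies in the $\operatorname{ord}_{P'}(L'_v)$-th power of the image of $I_v$. -/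
noncomputable section

namespace AdjointRestriction

open MvPolynomial

/-- The embedding `y ↦ (1, y₁, …, yₙ)` of affine space into homogeneous coordinates. -/
def lift1 {n : ℕ} (y : Fin n → ℝ) : Fin (n + 1) → ℝ := Fin.cons 1 y

/-- The dimension of the affine span of a set, with `dim ∅ = -1`. -/
def affDim {n : ℕ} (s : Set (Fin n → ℝ)) : ℤ :=
  open Classical in
  if s.Nonempty then (Module.finrank ℝ (affineSpan ℝ s).direction : ℤ) else -1

/-- The polytope `P = {y ∈ ℝⁿ | ℓᵢ(1, y) ≥ 0 for all i}`. -/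
def polytopeOf {n d : ℕ} (ℓ : Fin d → MvPolynomial (Fin (n + 1)) ℝ) : Set (Fin n → ℝ) :=
  {y | ∀ i, 0 ≤ eval (lift1 y) (ℓ i)}

/-- The facet `Fᵢ = {y ∈ P | ℓᵢ(1, y) = 0}`. -/
def facetOf {n d : ℕ} (ℓ : Fin d → MvPolynomial (Fin (n + 1)) ℝ) (i : Fin d) :
    Set (Fin n → ℝ) :=
  {y ∈ polytopeOf ℓ | eval (lift1 y) (ℓ i) = 0}

/-- `ℓ₁, …, ℓ_d` are the homogenized facet equations of a full-dimensional polytope in `ℝⁿ`. -/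
structure IsPolytopeSetup {n d : ℕ} (ℓ : Fin d → MvPolynomial (Fin (n + 1)) ℝ) : Prop where
  one_le : 1 ≤ n
  homogeneous : ∀ i, (ℓ i).IsHomogeneous 1
  ne_zero : ∀ i, ℓ i ≠ 0
  not_proportional : ∀ i j, i ≠ j → ∀ c : ℝ, c • ℓ i ≠ ℓ j
  compact : IsCompact (polytopeOf ℓ)
  full : affineSpan ℝ (polytopeOf ℓ) = ⊤
  facet_dim : ∀ i, affDim (facetOf ℓ i) = (n : ℤ) - 1

/-- The flat `F_v = {i | ℓᵢ(v) = 0}` of all facet hyperplanes through the point `v` of complex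
projective space. -/
def flatOf {n d : ℕ} (ℓ : Fin d → MvPolynomial (Fin (n + 1)) ℝ) (v : Fin (n + 1) → ℂ) :
    Finset (Fin d) :=
  open Classical in
  Finset.univ.filter fun i => aeval v (ℓ i) = 0

/-- The rank of a set `S` of facet hyperplanes: the dimension of the linear span of
`{ℓᵢ : i ∈ S}`, which is the codimension of the intersection of these hyperplanes. -/
def rkOf {n d : ℕ} (ℓ : Fin d → MvPolynomial (Fin (n + 1)) ℝ) (S : Finset (Fin d)) : ℕ :=
  Module.finrank ℝ (Submodule.span ℝ (ℓ '' (S : Set (Fin d))))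

/-- The intersection of `P` with the facet hyperplanes in `S`. -/
def faceOf {n d : ℕ} (ℓ : Fin d → MvPolynomial (Fin (n + 1)) ℝ) (S : Finset (Fin d)) :
    Set (Fin n → ℝ) :=
  {y ∈ polytopeOf ℓ | ∀ i ∈ S, eval (lift1 y) (ℓ i) = 0}

/-- The order `ord_P(L_v)`: the nullity `|F_v| - r_v`, plus one unless `L_v ∩ P` has the
dimension `n - r_v` of `L_v`. -/
def ordOf {n d : ℕ} (ℓ : Fin d → MvPolynomial (Fin (n + 1)) ℝ) (v : Fin (n + 1) → ℂ) : ℕ :=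
  open Classical in
  if affDim (faceOf ℓ (flatOf ℓ v)) = (n : ℤ) - rkOf ℓ (flatOf ℓ v)
  then (flatOf ℓ v).card - rkOf ℓ (flatOf ℓ v)
  else (flatOf ℓ v).card - rkOf ℓ (flatOf ℓ v) + 1

/-- Incidence of the facets `Fᵢ` and `Fⱼ`: they are distinct and meet in a face of codimension
two. As `dim ∅ = -1`, the two endpoints of a segment (`n = 1`) are incident. -/
def Incident {n d : ℕ} (ℓ : Fin d → MvPolynomial (Fin (n + 1)) ℝ) (i j : Fin d) : Prop :=
  i ≠ j ∧ affDim (facetOf ℓ i ∩ facetOf ℓ j) = (n : ℤ) - 2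

/-- The indices different from `i₀` of the facets that are not incident to `F_{i₀}`. -/
def nonIncident {n d : ℕ} (ℓ : Fin d → MvPolynomial (Fin (n + 1)) ℝ) (i₀ : Fin d) :
    Finset (Fin d) :=
  open Classical in
  Finset.univ.filter fun j => j ≠ i₀ ∧ ¬ Incident ℓ j i₀

/-- For a point `v` of the hyperplane `H = {ℓ_{i₀} = 0}`, the flat `F'_v` of the facet polytope
`P' = P ∩ H` at `v`. The facet hyperplanes of `P'` in `H` are the `H ∩ {ℓⱼ = 0}` with `Fⱼ`
incident to `F_{i₀}`. -/
def facetFlatOf {n d : ℕ} (ℓ : Fin d → MvPolynomial (Fin (n + 1)) ℝ) (i₀ : Fin d)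
    (v : Fin (n + 1) → ℂ) : Finset (Fin d) :=
  open Classical in
  Finset.univ.filter fun j => Incident ℓ j i₀ ∧ aeval v (ℓ j) = 0

/-- The rank of `F'_v` in the arrangement of `P'`, that is the codimension in `H` of
`L'_v = H ∩ ⋂_{j ∈ F'_v} {ℓⱼ = 0}`, which is one less than its codimension in the ambient
projective space. -/
def facetRkOf {n d : ℕ} (ℓ : Fin d → MvPolynomial (Fin (n + 1)) ℝ) (i₀ : Fin d)
    (v : Fin (n + 1) → ℂ) : ℕ :=
  rkOf ℓ (insert i₀ (facetFlatOf ℓ i₀ v)) - 1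

/-- The order `ord_{P'}(L'_v)` with respect to the polytope `P' = P ∩ H` of dimension `n - 1`
in `H = {ℓ_{i₀} = 0}`: the nullity `|F'_v| - r'_v`, plus one unless `L'_v ∩ P'` has the
dimension `(n - 1) - r'_v` of `L'_v`. -/
def facetOrdOf {n d : ℕ} (ℓ : Fin d → MvPolynomial (Fin (n + 1)) ℝ) (i₀ : Fin d)
    (v : Fin (n + 1) → ℂ) : ℕ :=
  open Classical in
  if affDim (faceOf ℓ (insert i₀ (facetFlatOf ℓ i₀ v))) = ((n : ℤ) - 1) - facetRkOf ℓ i₀ v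
  then (facetFlatOf ℓ i₀ v).card - facetRkOf ℓ i₀ v
  else (facetFlatOf ℓ i₀ v).card - facetRkOf ℓ i₀ v + 1

/-- The ideal `I_v ⊆ ℂ[X₀, …, Xₙ]` generated by all homogeneous polynomials of degree one
vanishing at `v`. -/
def pointIdeal {n : ℕ} (v : Fin (n + 1) → ℂ) : Ideal (MvPolynomial (Fin (n + 1)) ℂ) :=
  Ideal.span {p | p.IsHomogeneous 1 ∧ eval v p = 0}

/-- A real polynomial viewed as a complex one. -/
def toC {n : ℕ} (p : MvPolynomial (Fin (n + 1)) ℝ) : MvPolynomial (Fin (n + 1)) ℂ :=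
  map (algebraMap ℝ ℂ) p

/-- The restriction of `g` to the hyperplane `{ℓ = 0}` vanishes at the point `v` of this
hyperplane to order at least `k`: the class of `g` in the homogeneous coordinate ring
`ℂ[X₀, …, Xₙ] / (ℓ)` lies in the `k`-th power of the ideal of `v`. -/
def RestrictionVanishes {n : ℕ} (ℓ g : MvPolynomial (Fin (n + 1)) ℂ) (v : Fin (n + 1) → ℂ)
    (k : ℕ) : Prop :=
  Ideal.Quotient.mk (Ideal.span {ℓ}) g ∈
    ((pointIdeal v).map (Ideal.Quotient.mk (Ideal.span {ℓ}))) ^ k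

end AdjointRestriction

end

/-!
The vanishing orders of `f` amount to one condition for every linear subspace `L` of `ℝ^(n+1)`:
along `L`, the order of `f` is at least the number of facet forms vanishing on `L` minus the
codimension of `L`, plus a defect of one when `L` is not spanned by its intersection with the cone
over the polytope. Conditions of this shape are inherited by the restriction of `f` to a facet
hyperplane and by the quotient of `f` by one of the forms. On the facet hyperplane, the traces of
the hyperplanes of non-incident facets have defect one, so their forms divide the restriction, and
the quotient is `g`.

The restriction is nonzero because, by induction on the dimension, such a nonzero polynomial of
degree at most `d - n - 1` exists only if the cone contains every point where all forms are
nonnegative: if `ℓ_{i₀}` divided `f`, the quotient would satisfy the conditions for the remaining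
forms, whose cone is strictly larger. Orders are measured along the generic line through a point:
this is a closed condition, hence passes from real to complex points, and a Taylor expansion turns
it into membership in a power of the ideal of the point.
-/

noncomputable section

namespace AdjointRestriction

open MvPolynomial Module

section LinearForms

lemma eq_of_forall_eval_algebraMap_eq {𝕜 A σ : Type*} [Field 𝕜] [Infinite 𝕜] [CommRing A]
    [IsDomain A] [Algebra 𝕜 A] {p q : MvPolynomial σ A}
    (h : ∀ x : σ → 𝕜, eval (algebraMap 𝕜 A ∘ x) p = eval (algebraMap 𝕜 A ∘ x) q) : p = q := by
  refine funext_set (fun _ => Set.range (algebraMap 𝕜 A))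
    (fun _ => Set.infinite_range_of_injective (algebraMap 𝕜 A).injective) fun x hx => ?_
  choose y hy using fun i => hx i (Set.mem_univ i)
  exact (funext hy : algebraMap 𝕜 A ∘ y = x) ▸ h y

lemma dual_apply_eq_sum {R σ : Type*} [CommSemiring R] [Fintype σ] [DecidableEq σ]
    (φ : Dual R (σ → R)) (x : σ → R) : φ x = ∑ i, φ (Pi.single i 1) * x i := by
  conv_lhs => rw [pi_eq_sum_univ' x, map_sum]
  exact Finset.sum_congr rfl fun i _ => by rw [map_smul, smul_eq_mul, mul_comm]

variable {R σ : Type*} (A : Type*) [CommSemiring R] [CommSemiring A] [Algebra R A]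
  [Fintype σ] [DecidableEq σ]

/-- A linear form on `R^σ`, viewed as a polynomial of degree one over an `R`-algebra `A`. -/
def linForm : Dual R (σ → R) →ₗ[R] MvPolynomial σ A where
  toFun φ := ∑ i, C (algebraMap R A (φ (Pi.single i 1))) * X i
  map_add' φ ψ := by simp [add_mul, Finset.sum_add_distrib]
  map_smul' c φ := by
    simp [Algebra.smul_def, MvPolynomial.algebraMap_apply, mul_assoc, Finset.mul_sum]

lemma linForm_apply (φ : Dual R (σ → R)) :
    linForm A φ = ∑ i, C (algebraMap R A (φ (Pi.single i 1))) * X i := rfl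

lemma isHomogeneous_linForm (φ : Dual R (σ → R)) : (linForm A φ).IsHomogeneous 1 :=
  IsHomogeneous.sum _ _ _ fun i _ => isHomogeneous_C_mul_X _ i

lemma map_linForm {B : Type*} [CommSemiring B] [Algebra R B] [Algebra A B] [IsScalarTower R A B]
    (φ : Dual R (σ → R)) : map (algebraMap A B) (linForm A φ) = linForm B φ := by
  simp [linForm_apply, ← IsScalarTower.algebraMap_apply]

lemma aeval_linForm {B : Type*} [CommSemiring B] [Algebra R B] [Algebra A B] [IsScalarTower R A B]
    (φ : Dual R (σ → R)) (v : σ → B) :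
    aeval v (linForm A φ) = ∑ i, φ (Pi.single i 1) • v i := by
  simp [linForm_apply, ← IsScalarTower.algebraMap_apply, Algebra.smul_def]

variable {A}

@[simp] lemma aeval_algebraMap_linForm {B : Type*} [CommSemiring B] [Algebra R B] [Algebra A B]
    [IsScalarTower R A B] (φ : Dual R (σ → R)) (x : σ → R) :
    aeval (algebraMap R B ∘ x) (linForm A φ) = algebraMap R B (φ x) := by
  simp [aeval_linForm, dual_apply_eq_sum φ x, Algebra.smul_def]

@[simp] lemma eval_algebraMap_linForm (φ : Dual R (σ → R)) (x : σ → R) :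
    eval (algebraMap R A ∘ x) (linForm A φ) = algebraMap R A (φ x) := by
  rw [← aeval_eq_eval, aeval_algebraMap_linForm]

@[simp] lemma eval_linForm_self (φ : Dual R (σ → R)) (x : σ → R) :
    eval x (linForm R φ) = φ x :=
  eval_algebraMap_linForm φ x

lemma linForm_injective (h : Function.Injective (algebraMap R A)) :
    Function.Injective (linForm A : Dual R (σ → R) → MvPolynomial σ A) := fun φ ψ hφ =>
  LinearMap.ext fun x => h <| by simp_rw [← eval_algebraMap_linForm (A := A), hφ]

@[simp] lemma linForm_eq_zero_iff {𝕜 : Type*} [Field 𝕜] [Nontrivial A] [Algebra 𝕜 A]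
    {φ : Dual 𝕜 (σ → 𝕜)} : linForm A φ = 0 ↔ φ = 0 :=
  map_eq_zero_iff _ (linForm_injective (algebraMap 𝕜 A).injective)

lemma exists_linForm_eq {p : MvPolynomial σ R} (hp : p.IsHomogeneous 1) :
    ∃ φ : Dual R (σ → R), linForm R φ = p := by
  have hX : Set.range X ⊆
      (LinearMap.range (linForm (R := R) (σ := σ) R) : Set (MvPolynomial σ R)) := by
    rintro _ ⟨i, rfl⟩
    exact ⟨LinearMap.proj i, by simp [linForm_apply, Pi.single_apply]⟩
  rw [← mem_homogeneousSubmodule, homogeneousSubmodule_one_eq_span_X] at hp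
  exact Submodule.span_le.2 hX hp

end LinearForms

section Substitution

section

variable {R A σ τ : Type*} [CommSemiring R] [CommSemiring A] [Algebra R A]
  [Fintype σ] [DecidableEq σ]

/-- Substitution of a linear map `e` into a polynomial, `f ↦ f ∘ e`. -/
def subst (e : (σ → R) →ₗ[R] (τ → R)) : MvPolynomial τ A →ₐ[A] MvPolynomial σ A :=
  aeval fun i => linForm A (LinearMap.proj i ∘ₗ e)

lemma subst_X (e : (σ → R) →ₗ[R] (τ → R)) (i : τ) :
    subst e (X i : MvPolynomial τ A) = linForm A (LinearMap.proj i ∘ₗ e) :=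
  aeval_X _ i

lemma isHomogeneous_subst (e : (σ → R) →ₗ[R] (τ → R)) {f : MvPolynomial τ A} {k : ℕ}
    (hf : f.IsHomogeneous k) : (subst e f).IsHomogeneous k := by
  have : (subst e f).IsHomogeneous (1 * k) := hf.aeval _ fun i => isHomogeneous_linForm A _
  rwa [one_mul] at this

variable [Fintype τ] [DecidableEq τ]

@[simp] lemma subst_linForm (e : (σ → R) →ₗ[R] (τ → R)) (φ : Dual R (τ → R)) :
    subst e (linForm A φ) = linForm A (φ ∘ₗ e) := by
  rw [subst, aeval_linForm]
  simp_rw [← map_smul, ← map_sum]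
  congr 1
  refine LinearMap.ext fun x => ?_
  simp [dual_apply_eq_sum φ (e x)]

lemma subst_subst {υ : Type*} (e : (σ → R) →ₗ[R] (τ → R)) (e' : (τ → R) →ₗ[R] (υ → R))
    (f : MvPolynomial υ A) :
    subst e (subst e' f) = subst (e' ∘ₗ e) f := by
  refine DFunLike.congr_fun (f := (subst e).comp (subst e')) (algHom_ext fun i => ?_) f
  simp [subst_X, LinearMap.comp_assoc]

lemma subst_id (f : MvPolynomial σ A) : subst (LinearMap.id : (σ → R) →ₗ[R] (σ → R)) f = f := by
  refine DFunLike.congr_fun (g := AlgHom.id A _) (algHom_ext fun i => ?_) f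
  simp [subst_X, linForm_apply, Pi.single_apply]

end

lemma mem_span_singleton_of_ker_le_ker {𝕜 E : Type*} [Field 𝕜] [AddCommGroup E] [Module 𝕜 E]
    {φ ψ : Dual 𝕜 E} (h : LinearMap.ker φ ≤ LinearMap.ker ψ) : ψ ∈ 𝕜 ∙ φ := by
  simpa using mem_span_of_iInf_ker_le_ker (L := fun _ : Unit => φ) (by simpa using h)

variable {𝕜 A σ τ : Type*} [Field 𝕜] [CommRing A] [Algebra 𝕜 A]
  [Fintype σ] [DecidableEq σ] [Fintype τ] [DecidableEq τ]

lemma linForm_dvd_linForm_of_ker_le_ker {φ ψ : Dual 𝕜 (σ → 𝕜)}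
    (h : LinearMap.ker φ ≤ LinearMap.ker ψ) : linForm A φ ∣ linForm A ψ := by
  obtain ⟨c, rfl⟩ := Submodule.mem_span_singleton.1 (mem_span_singleton_of_ker_le_ker h)
  rw [map_smul, ← algebraMap_smul A, smul_eq_C_mul]
  exact dvd_mul_left _ _

/-- The restriction of `f` to the hyperplane `φ = 0` is the substitution of a parametrization of
that hyperplane. -/
lemma linForm_dvd_iff_subst_eq_zero {φ : Dual 𝕜 (τ → 𝕜)} {e : (σ → 𝕜) →ₗ[𝕜] (τ → 𝕜)}
    (he : Function.Injective e) (hr : LinearMap.range e = LinearMap.ker φ)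
    {f : MvPolynomial τ A} : linForm A φ ∣ f ↔ subst e f = 0 := by
  constructor
  · rintro ⟨g, rfl⟩
    rw [map_mul, subst_linForm, LinearMap.range_le_ker_iff.1 hr.le, map_zero, zero_mul]
  · intro hf
    obtain ⟨q, hq⟩ := e.exists_leftInverse_of_injective (LinearMap.ker_eq_bot.2 he)
    let I := Ideal.span {linForm A φ}
    have hX : ∀ i, X i - subst (e ∘ₗ q) (X i) ∈ I := fun i => by
      rw [Ideal.mem_span_singleton, subst_X, ← subst_id (R := 𝕜) (X i), subst_X, ← map_sub]
      refine linForm_dvd_linForm_of_ker_le_ker (hr ▸ ?_)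
      rintro _ ⟨x, rfl⟩
      simp [← LinearMap.comp_apply q e, hq]
    have hI : Ideal.Quotient.mkₐ A I = (Ideal.Quotient.mkₐ A I).comp (subst (e ∘ₗ q)) :=
      algHom_ext fun i => Ideal.Quotient.eq.2 (hX i)
    simpa [← subst_subst q e, hf, I, Ideal.mem_span_singleton] using
      Ideal.Quotient.eq.1 (DFunLike.congr_fun hI f)

end Substitution

lemma isHomogeneous_of_mul_left {σ R : Type*} [CommSemiring R] [NoZeroDivisors R]
    {p g : MvPolynomial σ R} {a e : ℕ} (hp : p.IsHomogeneous a) (hpg : (p * g).IsHomogeneous e)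
    (h0 : p * g ≠ 0) : ∃ b, e = a + b ∧ g.IsHomogeneous b := by
  classical
  let _ : GradedAlgebra (homogeneousSubmodule σ R) := gradedAlgebra
  have hcomp : ∀ (i : ℕ) (q : MvPolynomial σ R),
      (DirectSum.decompose (homogeneousSubmodule σ R) q i : MvPolynomial σ R) =
        homogeneousComponent i q := fun i q => by
    rw [← decomposition.decompose'_apply]
    rfl
  have hmul : ∀ i, homogeneousComponent (a + i) (p * g) = p * homogeneousComponent i g := by
    intro i
    rw [← hcomp, ← hcomp]
    exact DirectSum.coe_decompose_mul_add_of_left_mem _ hp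
  have hdeg : ∀ s, coeff s g ≠ 0 → e = a + s.degree := fun s hs => by
    by_contra hne
    have h := hmul s.degree
    rw [homogeneousComponent_of_mem hpg, if_neg (Ne.symm hne), zero_eq_mul] at h
    refine hs ?_
    simpa [coeff_homogeneousComponent] using
      congrArg (coeff s) (h.resolve_left (left_ne_zero_of_mul h0))
  obtain ⟨s, hs⟩ := ne_zero_iff.1 (right_ne_zero_of_mul h0)
  refine ⟨s.degree, hdeg s hs, fun t ht => ?_⟩
  have hst := hdeg s hs ▸ hdeg t ht
  exact (DFunLike.congr_fun Finsupp.degree_eq_weight_one t).symm.trans (by omega)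

lemma isHomogeneous_of_mul_prod_linForm {R A σ ι : Type*} [CommSemiring R] [CommSemiring A]
    [NoZeroDivisors A] [Algebra R A] [Fintype σ] [DecidableEq σ] {g : MvPolynomial σ A} {k : ℕ}
    {N : Finset ι} {ψ : ι → Dual R (σ → R)}
    (h : (g * ∏ j ∈ N, linForm A (ψ j)).IsHomogeneous k)
    (h0 : g * ∏ j ∈ N, linForm A (ψ j) ≠ 0) : g.IsHomogeneous (k - N.card) := by
  have hprod : (∏ j ∈ N, linForm A (ψ j)).IsHomogeneous N.card := by
    simpa using IsHomogeneous.prod N _ _ fun j _ => isHomogeneous_linForm A (ψ j)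
  rw [mul_comm] at h h0
  obtain ⟨b, rfl, hg⟩ := isHomogeneous_of_mul_left hprod h h0
  rwa [Nat.add_sub_cancel_left]

section VanishingOrder

variable {σ A B : Type*} [CommRing A] [CommRing B] [Algebra A B]

/-- The restriction `f (v + T X)` of a polynomial `f` to the line through `v` in the direction of
the generic point `X`, as a polynomial in `T`. -/
def genericLine (v : σ → B) : MvPolynomial σ A →ₐ[A] Polynomial (MvPolynomial σ B) :=
  aeval fun i => Polynomial.C (C (v i)) + Polynomial.X * Polynomial.C (X i)

lemma genericLine_X (v : σ → B) (i : σ) :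
    genericLine v (X i : MvPolynomial σ A) =
      Polynomial.C (C (v i)) + Polynomial.X * Polynomial.C (X i) :=
  aeval_X _ i

lemma genericLine_C (v : σ → B) (a : A) :
    genericLine v (C a : MvPolynomial σ A) = Polynomial.C (C (algebraMap A B a)) :=
  aeval_C _ a

lemma coeff_zero_genericLine (v : σ → B) (f : MvPolynomial σ A) :
    (genericLine v f).coeff 0 = C (aeval v f) := by
  induction f using MvPolynomial.induction_on with
  | C a => simp
  | add p q hp hq => simp [hp, hq]
  | mul_X p i hp => simp [genericLine_X, Polynomial.mul_coeff_zero, hp]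

/-- The polynomial `f` vanishes to order at least `k` at the point `v`, whose coordinates may lie
in an algebra over the coefficient ring: the restriction of `f` to the generic line through `v`
does. -/
def VanishesToOrder (k : ℕ) (f : MvPolynomial σ A) (v : σ → B) : Prop :=
  Polynomial.X ^ k ∣ genericLine v f

lemma VanishesToOrder.mono {k l : ℕ} {f : MvPolynomial σ A} {v : σ → B}
    (h : VanishesToOrder k f v) (hl : l ≤ k) : VanishesToOrder l f v :=
  (pow_dvd_pow _ hl).trans h

lemma vanishesToOrder_one_iff {f : MvPolynomial σ A} {v : σ → B} :
    VanishesToOrder 1 f v ↔ aeval v f = 0 := by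
  rw [VanishesToOrder, pow_one, Polynomial.X_dvd_iff, coeff_zero_genericLine, C_eq_zero]

lemma VanishesToOrder.of_mul [IsDomain B] {j k : ℕ} {p g : MvPolynomial σ A} {v : σ → B}
    (h : VanishesToOrder (j + k) (p * g) v) (hp : ¬ VanishesToOrder (j + 1) p v) :
    VanishesToOrder k g v := by
  rw [VanishesToOrder, pow_dvd_iff_le_emultiplicity] at h hp ⊢
  rw [map_mul, emultiplicity_mul Polynomial.prime_X] at h
  have hp' : emultiplicity Polynomial.X (genericLine v p) ≤ j := by
    rw [not_le, Nat.cast_add, Nat.cast_one] at hp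
    exact Order.le_of_lt_add_one hp
  rw [Nat.cast_add] at h
  exact (ENat.add_le_add_iff_left (ENat.natCast_ne_top j)).1 (h.trans (by gcongr))

lemma vanishesToOrder_zero_of_isHomogeneous {e : ℕ} {f : MvPolynomial σ A}
    (hf : f.IsHomogeneous e) : VanishesToOrder e f (0 : σ → B) := by
  rw [VanishesToOrder, genericLine, aeval_def, eval₂_eq]
  refine Finset.dvd_sum fun d hd => Dvd.dvd.mul_left ?_ _
  have hde : ∑ i ∈ d.support, d i = e := by
    rw [← hf (mem_support_iff.1 hd), Finsupp.weight_apply]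
    simp [Finsupp.sum]
  simp only [Pi.zero_apply, map_zero, zero_add, mul_pow, Finset.prod_mul_distrib,
    Finset.prod_pow_eq_pow_sum, hde]
  exact dvd_mul_right _ _

section Evaluation

variable {B' : Type*} [CommRing B'] [Algebra A B']

lemma genericLine_comp (θ : B →ₐ[A] B') (v : σ → B) (f : MvPolynomial σ A) :
    genericLine (θ ∘ v) f = (genericLine v f).map (map (θ : B →+* B')) := by
  refine DFunLike.congr_fun
    (g := (Polynomial.mapAlgHom (mapAlgHom θ)).comp (genericLine v)) (algHom_ext fun i => ?_) f
  simp [genericLine_X]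

lemma VanishesToOrder.map {k : ℕ} {f : MvPolynomial σ A} {v : σ → B} (h : VanishesToOrder k f v)
    (θ : B →ₐ[A] B') : VanishesToOrder k f (θ ∘ v) := by
  rw [VanishesToOrder, genericLine_comp]
  simpa using Polynomial.map_dvd (MvPolynomial.map (θ : B →+* B')) h

lemma vanishesToOrder_of_forall_map {k : ℕ} {f : MvPolynomial σ A} {v : σ → B}
    {Θ : Set (B →ₐ[A] B')} (hΘ : ∀ b, (∀ θ ∈ Θ, θ b = 0) → b = 0)
    (h : ∀ θ ∈ Θ, VanishesToOrder k f (θ ∘ v)) : VanishesToOrder k f v := by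
  refine Polynomial.X_pow_dvd_iff.2 fun j hj => MvPolynomial.ext _ _ fun m => hΘ _ fun θ hθ => ?_
  have := Polynomial.X_pow_dvd_iff.1 (h θ hθ) j hj
  rw [genericLine_comp, Polynomial.coeff_map] at this
  simpa [coeff_map] using congrArg (coeff m) this

end Evaluation

lemma VanishesToOrder.of_infinite [IsDomain A] {k : ℕ} {f : MvPolynomial σ A} {v u : σ → A}
    {s : Set A} (hs : s.Infinite) (h : ∀ a ∈ s, VanishesToOrder k f (v + a • u)) (a : A) :
    VanishesToOrder k f (v + a • u) := by
  let w : σ → Polynomial A := fun i => Polynomial.C (v i) + Polynomial.X * Polynomial.C (u i)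
  have hw : ∀ b, Polynomial.aeval b ∘ w = v + b • u := fun b => by
    ext i
    simp [w, mul_comm b]
  rw [← hw]
  refine VanishesToOrder.map (vanishesToOrder_of_forall_map (Θ := Polynomial.aeval '' s) ?_ ?_) _
  · refine fun p hp => Polynomial.eq_zero_of_infinite_isRoot p (hs.mono fun b hb => ?_)
    simpa using hp _ (Set.mem_image_of_mem _ hb)
  · rintro _ ⟨b, hb, rfl⟩
    exact hw b ▸ h b hb

lemma vanishesToOrder_of_mem_pow {k : ℕ} {f : MvPolynomial σ A} {v : σ → B}
    {I : Ideal (MvPolynomial σ A)} (hI : ∀ p ∈ I, aeval v p = 0) (hf : f ∈ I ^ k) :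
    VanishesToOrder k f v := by
  have hle : I.map (genericLine (A := A) v) ≤ Ideal.span {Polynomial.X} :=
    Ideal.map_le_iff_le_comap.2 fun p hp => Ideal.mem_span_singleton.2 <| by
      simpa [VanishesToOrder] using vanishesToOrder_one_iff.2 (hI p hp)
  have := Ideal.pow_right_mono hle k (Ideal.map_pow (genericLine v) I k ▸ Ideal.mem_map_of_mem _ hf)
  rwa [Ideal.span_singleton_pow, Ideal.mem_span_singleton] at this

/-- By Taylor expansion at `w`, a polynomial vanishing there to order `k` takes values in `I ^ k` at
all points congruent to `w` modulo `I`. -/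
lemma VanishesToOrder.aeval_add_mem_pow {k : ℕ} {f : MvPolynomial σ A} {w q : σ → B} {I : Ideal B}
    (h : VanishesToOrder k f w) (hq : ∀ i, q i ∈ I) : aeval (w + q) f ∈ I ^ k := by
  let G : MvPolynomial σ A →ₐ[A] Polynomial B :=
    aeval fun i => Polynomial.C (w i) + Polynomial.monomial 1 (q i)
  have hrees : G f ∈ reesAlgebra I := by
    have hG : G f ∈ Algebra.adjoin A (Set.range fun i =>
        Polynomial.C (w i) + Polynomial.monomial 1 (q i)) := by
      rw [Algebra.adjoin_range_eq_range_aeval]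
      exact ⟨f, rfl⟩
    refine Algebra.adjoin_le (S := (reesAlgebra I).restrictScalars A) ?_ hG
    rintro _ ⟨i, rfl⟩
    exact add_mem (Subalgebra.algebraMap_mem _ (w i))
      (reesAlgebra.monomial_mem.2 (by simpa using hq i))
  have hdvd : Polynomial.X ^ k ∣ G f := by
    let ρ := Polynomial.mapAlgHom ((aeval q : _ →ₐ[B] B).restrictScalars A)
    have hG : ρ.comp (genericLine w) = G := algHom_ext fun i => by
      simp [ρ, G, genericLine_X, ← Polynomial.C_mul_X_eq_monomial]
    have := map_dvd ρ h
    rw [map_pow, ← AlgHom.comp_apply, hG] at this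
    simpa [ρ] using this
  have heval : (G f).eval 1 = aeval (w + q) f :=
    DFunLike.congr_fun (f := ((Polynomial.aeval (1 : B)).restrictScalars A).comp G)
      (algHom_ext fun i => by simp [G]) f
  rw [← heval, Polynomial.eval_eq_sum_range]
  refine Ideal.sum_mem _ fun j _ => ?_
  rw [one_pow, mul_one]
  obtain hj | hj := lt_or_ge j k
  · rw [Polynomial.X_pow_dvd_iff.1 hdvd j hj]
    exact zero_mem _
  · exact Ideal.pow_le_pow_right hj (hrees j)

variable {R τ : Type*} [CommRing R] [Algebra R A] [Algebra R B] [IsScalarTower R A B] [Fintype σ]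
  [DecidableEq σ]

lemma genericLine_linForm (v : σ → B) (φ : Dual R (σ → R)) :
    genericLine v (linForm A φ) =
      Polynomial.C (C (aeval v (linForm A φ))) + Polynomial.X * Polynomial.C (linForm B φ) := by
  rw [aeval_linForm]
  simp only [linForm_apply, map_sum, map_mul, genericLine_X, mul_add, Finset.sum_add_distrib,
    Finset.mul_sum, Algebra.smul_def, genericLine_C, ← IsScalarTower.algebraMap_apply,
    mul_left_comm _ Polynomial.X]

lemma VanishesToOrder.subst {k : ℕ} {f : MvPolynomial τ A} (e : (σ → R) →ₗ[R] (τ → R)) {v : σ → R}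
    (h : VanishesToOrder k f (algebraMap R A ∘ e v)) :
    VanishesToOrder k (subst e f) (algebraMap R A ∘ v) := by
  have hcomp : (genericLine (algebraMap R A ∘ v)).comp (AdjointRestriction.subst e) =
      (Polynomial.mapAlgHom (AdjointRestriction.subst e)).comp
        (genericLine (A := A) (algebraMap R A ∘ e v)) :=
    algHom_ext fun i => by simp [subst_X, genericLine_X, genericLine_linForm]
  have := map_dvd (Polynomial.mapAlgHom (AdjointRestriction.subst (A := A) e)) h
  rw [map_pow, ← AlgHom.comp_apply, ← hcomp] at this
  simpa [VanishesToOrder] using this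

lemma not_vanishesToOrder_two_linForm {𝕜 : Type*} [Field 𝕜] [Algebra 𝕜 A] [Algebra 𝕜 B]
    [IsScalarTower 𝕜 A B] [Nontrivial B] {φ : Dual 𝕜 (σ → 𝕜)} (hφ : φ ≠ 0) (v : σ → B) :
    ¬ VanishesToOrder 2 (linForm A φ) v := fun h => by
  have := Polynomial.X_pow_dvd_iff.1 h 1 one_lt_two
  simp [genericLine_linForm, hφ] at this

end VanishingOrder

section ComplexPoints

lemma vanishesToOrder_of_mem_pointIdeal_pow {n k : ℕ} {f : MvPolynomial (Fin (n + 1)) ℂ}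
    {v : Fin (n + 1) → ℂ} (h : f ∈ pointIdeal v ^ k) : VanishesToOrder k f v := by
  refine vanishesToOrder_of_mem_pow (fun p hp => ?_) h
  have hle : pointIdeal v ≤ RingHom.ker (eval v) := Ideal.span_le.2 fun p hp => hp.2
  exact hle hp

/-- The generic point `X` is congruent modulo the ideal of `v` to a multiple of `v`. -/
lemma mem_pointIdeal_pow_of_forall_smul {n k : ℕ} {f : MvPolynomial (Fin (n + 1)) ℂ}
    {v : Fin (n + 1) → ℂ} (hv : v ≠ 0) (h : ∀ a : ℂ, VanishesToOrder k f (a • v)) :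
    f ∈ pointIdeal v ^ k := by
  obtain ⟨c, hc⟩ := Function.ne_iff.1 hv
  let w : Fin (n + 1) → MvPolynomial (Fin (n + 1)) ℂ := fun i => C (v i * (v c)⁻¹) * X c
  have hw : VanishesToOrder k f w := by
    refine vanishesToOrder_of_forall_map (Θ := Set.range fun x => (aeval x : _ →ₐ[ℂ] ℂ))
      (fun b hb => funext fun x => ?_) ?_
    · simpa using hb _ ⟨x, rfl⟩
    · rintro _ ⟨x, rfl⟩
      convert h ((v c)⁻¹ * x c) using 1
      ext i
      simp [w]
      ring
  have hmem : ∀ i, X i - w i ∈ pointIdeal v := fun i => Ideal.subset_span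
    ⟨(isHomogeneous_X ℂ i).sub (isHomogeneous_C_mul_X _ c), by
      simp [w, mul_assoc, inv_mul_cancel₀ (show v c ≠ 0 from hc)]⟩
  have hX : (w + fun i => X i - w i) = X := by
    ext i
    simp
  simpa [hX] using hw.aeval_add_mem_pow hmem

lemma aeval_linForm_eq_zero_iff {σ : Type*} [Fintype σ] [DecidableEq σ] {v : σ → ℂ}
    {φ : Dual ℝ (σ → ℝ)} :
    aeval v (linForm ℝ φ) = 0 ↔ φ (Complex.re ∘ v) = 0 ∧ φ (Complex.im ∘ v) = 0 := by
  simp [aeval_linForm, Complex.ext_iff, dual_apply_eq_sum φ (_ ∘ v)]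

lemma mem_pointIdeal_pow_of_forall_real {n k : ℕ} {f : MvPolynomial (Fin (n + 1)) ℂ}
    {v : Fin (n + 1) → ℂ} {S : Set (Dual ℝ (Fin (n + 1) → ℝ))} (hv0 : v ≠ 0)
    (hv : ∀ φ ∈ S, aeval v (linForm ℝ φ) = 0)
    (h : ∀ u, (∀ φ ∈ S, φ u = 0) → VanishesToOrder k f (algebraMap ℝ ℂ ∘ u)) :
    f ∈ pointIdeal v ^ k := by
  refine mem_pointIdeal_pow_of_forall_smul hv0 fun a => ?_
  set w := a • v with hw
  have hwS : ∀ φ ∈ S, φ (Complex.re ∘ w) = 0 ∧ φ (Complex.im ∘ w) = 0 := fun φ hφ =>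
    aeval_linForm_eq_zero_iff.1 <| by
      simpa [hw, aeval_linForm, mul_left_comm _ a, ← Finset.mul_sum] using Or.inr (hv φ hφ)
  have hreal : ∀ t ∈ Set.range (algebraMap ℝ ℂ), VanishesToOrder k f
      (algebraMap ℝ ℂ ∘ (Complex.re ∘ w) + t • (algebraMap ℝ ℂ ∘ (Complex.im ∘ w))) := by
    rintro _ ⟨t, rfl⟩
    convert h (Complex.re ∘ w + t • (Complex.im ∘ w)) fun φ hφ => by simp [hwS φ hφ] using 1
    ext i
    simp
  convert VanishesToOrder.of_infinite (Set.infinite_range_of_injective Complex.ofReal_injective)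
    hreal Complex.I using 1
  ext i
  simp [mul_comm Complex.I, Complex.re_add_im]

end ComplexPoints

section AdjointPolynomials

variable {𝕜 E : Type*} [Field 𝕜] [LinearOrder 𝕜] [IsStrictOrderedRing 𝕜] [AddCommGroup E]
  [Module 𝕜 E]

open Classical in
/-- The correction term of the vanishing conditions along `L`: zero if `L` is spanned by its
intersection with the cone `K`, one otherwise. -/
def defect (K : PointedCone 𝕜 E) (L : Submodule 𝕜 E) : ℕ :=
  if Submodule.span 𝕜 ((K : Set E) ∩ L) = L then 0 else 1

lemma defect_map {E' : Type*} [AddCommGroup E'] [Module 𝕜 E'] {e : E →ₗ[𝕜] E'}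
    (he : Function.Injective e) (K : PointedCone 𝕜 E') (L : Submodule 𝕜 E) :
    defect K (L.map e) = defect (K.comap e) L := by
  have himage : e '' ((K.comap e : Set E) ∩ L) = (K : Set E') ∩ L.map e := by
    rw [Submodule.map_coe, Set.inter_comm (K : Set E'), ← Set.image_inter_preimage, Set.inter_comm]
    rfl
  simp only [defect, ← himage, Submodule.span_image,
    (Submodule.map_injective_of_injective he).eq_iff]

lemma defect_bot (K : PointedCone 𝕜 E) : defect K ⊥ = 0 :=
  if_pos (Submodule.span_eq_bot.2 fun _ hx => hx.2)

lemma finrank_add_defect_mono [FiniteDimensional 𝕜 E] (K : PointedCone 𝕜 E)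
    {L L' : Submodule 𝕜 E} (h : L ≤ L') :
    finrank 𝕜 L + defect K L ≤ finrank 𝕜 L' + defect K L' := by
  obtain rfl | hlt := h.eq_or_lt
  · rfl
  · have := Submodule.finrank_lt_finrank_of_lt hlt
    have : defect K L ≤ 1 := ite_le_one zero_le_one le_rfl
    omega

lemma exists_exit {ι : Type*} {S : Finset ι} {φ : ι → Dual 𝕜 E} {w z : E}
    (hw : ∀ i ∈ S, 0 ≤ φ i w) (hz : ∃ i ∈ S, φ i z < 0) :
    ∃ t : 𝕜, 0 ≤ t ∧ (∀ i ∈ S, 0 ≤ φ i (w + t • z)) ∧ ∃ i ∈ S, φ i (w + t • z) = 0 := by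
  classical
  obtain ⟨i, hi, hiz⟩ := hz
  obtain ⟨j, hj, hmin⟩ := (S.filter fun i => φ i z < 0).exists_min_image
    (fun i => φ i w / -φ i z) ⟨i, Finset.mem_filter.2 ⟨hi, hiz⟩⟩
  obtain ⟨hjS, hjz⟩ := Finset.mem_filter.1 hj
  have ht : 0 ≤ φ j w / -φ j z := div_nonneg (hw j hjS) (by linarith)
  simp only [map_add, map_smul, smul_eq_mul]
  refine ⟨_, ht, fun k hk => ?_, j, hjS, by field_simp [hjz.ne]; ring⟩
  by_cases hkz : φ k z < 0
  · have := hmin k (Finset.mem_filter.2 ⟨hk, hkz⟩)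
    rw [le_div_iff₀ (by linarith)] at this
    linarith
  · exact add_nonneg (hw k hk) (mul_nonneg ht (not_lt.1 hkz))

/-- Follow the line through `w` in a direction along which one form increases and another one
decreases. -/
lemma mem_of_forall_boundary_mem {ι : Type*} {S : Finset ι} {φ : ι → Dual 𝕜 E}
    {K : PointedCone 𝕜 E}
    (hK : ∀ x, (∀ i ∈ S, 0 ≤ φ i x) → (∃ i ∈ S, φ i x = 0) → x ∈ K) {z : E}
    (hpos : ∃ i ∈ S, 0 < φ i z) (hneg : ∃ i ∈ S, φ i z < 0) {w : E}
    (hw : ∀ i ∈ S, 0 ≤ φ i w) : w ∈ K := by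
  obtain ⟨t, ht, ht_nonneg, ht_zero⟩ := exists_exit hw hneg
  obtain ⟨s, hs, hs_nonneg, hs_zero⟩ := exists_exit (z := -z) hw (by simpa using hpos)
  have htK := hK _ ht_nonneg ht_zero
  have hsK := hK _ hs_nonneg hs_zero
  obtain rfl | ht' := ht.eq_or_lt
  · simpa using htK
  have hst : 0 < s + t := by linarith
  have hwc : w = (s / (s + t)) • (w + t • z) + (t / (s + t)) • (w + s • -z) := by
    match_scalars <;> field_simp
    ring
  rw [hwc]
  exact K.add_mem (K.smul_mem (div_nonneg hs hst.le) htK) (K.smul_mem (div_nonneg ht hst.le) hsK)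

lemma exists_pos_neg_of_not_ker_le_ker {φ ψ : Dual 𝕜 E}
    (h : ¬ LinearMap.ker φ ≤ LinearMap.ker ψ) (h' : ¬ LinearMap.ker ψ ≤ LinearMap.ker φ) :
    ∃ z, 0 < φ z ∧ ψ z < 0 := by
  obtain ⟨x, hx, hx0⟩ := SetLike.not_le_iff_exists.1 h
  obtain ⟨y, hy, hy0⟩ := SetLike.not_le_iff_exists.1 h'
  rw [LinearMap.mem_ker] at hx hx0 hy hy0
  exact ⟨(φ y)⁻¹ • y - (ψ x)⁻¹ • x, by simp [hx, hy0], by simp [hy, hx0]⟩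

lemma exists_param_ker {𝕜 : Type*} [Field 𝕜] {m : ℕ} {φ : Dual 𝕜 (Fin (m + 1) → 𝕜)} (h : φ ≠ 0) :
    ∃ e : (Fin m → 𝕜) →ₗ[𝕜] (Fin (m + 1) → 𝕜), Function.Injective e ∧
      LinearMap.range e = LinearMap.ker φ := by
  have hm : finrank 𝕜 (LinearMap.ker φ) = m := by
    simpa using Module.Dual.finrank_ker_add_one_of_ne_zero h
  let b := finBasisOfFinrankEq 𝕜 (LinearMap.ker φ) hm
  refine ⟨(LinearMap.ker φ).subtype ∘ₗ b.equivFun.symm.toLinearMap, ?_, ?_⟩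
  · exact (Submodule.subtype_injective _).comp b.equivFun.symm.injective
  · rw [LinearMap.range_comp_of_range_eq_top _ (LinearEquiv.range _), Submodule.range_subtype]

variable {A ι : Type*} [CommRing A] [Algebra 𝕜 A] {m : ℕ}

/-- A generic line in `L` through `v` meets each of the hyperplanes `ψ i = 0` at most once. -/
lemma VanishesToOrder.of_forall_ne_zero [IsDomain A] {k : ℕ} {f : MvPolynomial (Fin m) A}
    {κ : Type*} [Finite κ] {ψ : κ → Dual 𝕜 (Fin m → 𝕜)} {L : Submodule 𝕜 (Fin m → 𝕜)}
    (hψ : ∀ i, ¬ L ≤ LinearMap.ker (ψ i))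
    (h : ∀ v ∈ L, (∀ i, ψ i v ≠ 0) → VanishesToOrder k f (algebraMap 𝕜 A ∘ v))
    {v : Fin m → 𝕜} (hv : v ∈ L) : VanishesToOrder k f (algebraMap 𝕜 A ∘ v) := by
  obtain ⟨u, hu, hu0⟩ := Module.Dual.exists_forall_mem_ne_zero_of_forall_exists L ψ fun i =>
    SetLike.not_le_iff_exists.1 (hψ i)
  have hs : {a : 𝕜 | ∀ i, ψ i (v + a • u) ≠ 0}.Infinite := by
    refine (Set.finite_range fun i => -(ψ i v) / ψ i u).infinite_compl.mono fun a ha i h0 => ?_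
    rw [map_add, map_smul, smul_eq_mul] at h0
    exact ha ⟨i, ((eq_div_iff (hu0 i)).2 (by linarith)).symm⟩
  have := VanishesToOrder.of_infinite (k := k) (f := f) (v := algebraMap 𝕜 A ∘ v)
    (u := algebraMap 𝕜 A ∘ u) (hs.image (algebraMap 𝕜 A).injective.injOn) ?_ 0
  · simpa using this
  · rintro _ ⟨a, ha, rfl⟩
    have hva : algebraMap 𝕜 A ∘ v + algebraMap 𝕜 A a • (algebraMap 𝕜 A ∘ u) =
        algebraMap 𝕜 A ∘ (v + a • u) := by
      ext
      simp [Algebra.smul_def]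
    rw [hva]
    exact h _ (L.add_mem hv (L.smul_mem a hu)) ha

open Classical in
/-- The vanishing conditions imposed on `f` by the arrangement of the hyperplanes `φ i = 0`,
`i ∈ S`, in `𝕜^m` and the cone `K`: along every linear subspace `L` the order of vanishing of `f` is
at least `#{i ∈ S | φ i = 0 on L} - codim L`, plus the defect of `L`. Repeated hyperplanes are
allowed. -/
def AdjointVanishing (K : PointedCone 𝕜 (Fin m → 𝕜)) (S : Finset ι)
    (φ : ι → Dual 𝕜 (Fin m → 𝕜)) (f : MvPolynomial (Fin m) A) : Prop :=
  ∀ (L : Submodule 𝕜 (Fin m → 𝕜)) (k : ℕ),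
    k + m ≤ (S.filter fun i => L ≤ LinearMap.ker (φ i)).card + finrank 𝕜 L + defect K L →
      ∀ v ∈ L, VanishesToOrder k f (algebraMap 𝕜 A ∘ v)

namespace AdjointVanishing

variable {K : PointedCone 𝕜 (Fin m → 𝕜)} {S : Finset ι} {φ : ι → Dual 𝕜 (Fin m → 𝕜)}

lemma linForm_dvd [IsDomain A] {f : MvPolynomial (Fin m) A} {ψ : Dual 𝕜 (Fin m → 𝕜)}
    (h : AdjointVanishing K S φ f) (hψ : ψ ≠ 0) {T : Finset ι} (hT : T ⊆ S)
    (hker : ∀ j ∈ T, LinearMap.ker ψ ≤ LinearMap.ker (φ j))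
    (hcard : 1 < T.card + defect K (LinearMap.ker ψ)) : linForm A ψ ∣ f := by
  classical
  cases m with
  | zero => exact absurd (Subsingleton.elim ψ 0) hψ
  | succ m =>
    obtain ⟨e, he, hr⟩ := exists_param_ker hψ
    rw [linForm_dvd_iff_subst_eq_zero he hr]
    refine eq_of_forall_eval_algebraMap_eq (𝕜 := 𝕜) fun x => ?_
    have hTS : T ⊆ S.filter fun j => LinearMap.ker ψ ≤ LinearMap.ker (φ j) := fun j hj =>
      Finset.mem_filter.2 ⟨hT hj, hker j hj⟩
    have hfin : finrank 𝕜 (LinearMap.ker ψ) + 1 = m + 1 := by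
      simpa using Module.Dual.finrank_ker_add_one_of_ne_zero hψ
    have := (h _ 1 (by have := Finset.card_le_card hTS; omega) (e x)
      (hr ▸ LinearMap.mem_range_self e x)).subst e
    simpa [aeval_eq_eval] using vanishesToOrder_one_iff.1 this

variable [DecidableEq ι]

lemma subst {K : PointedCone 𝕜 (Fin (m + 1) → 𝕜)} {S : Finset ι}
    {φ : ι → Dual 𝕜 (Fin (m + 1) → 𝕜)} {f : MvPolynomial (Fin (m + 1)) A}
    (h : AdjointVanishing K S φ f) {i : ι} (hi : i ∈ S)
    {e : (Fin m → 𝕜) →ₗ[𝕜] (Fin (m + 1) → 𝕜)} (he : Function.Injective e)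
    (hr : LinearMap.range e = LinearMap.ker (φ i)) :
    AdjointVanishing (K.comap e) (S.erase i) (fun j => φ j ∘ₗ e) (subst e f) := by
  classical
  intro L k hk v hv
  refine (h (L.map e) k ?_ _ (Submodule.mem_map_of_mem hv)).subst e
  have hle : ∀ j, L.map e ≤ LinearMap.ker (φ j) ↔ L ≤ LinearMap.ker (φ j ∘ₗ e) := fun j => by
    rw [Submodule.map_le_iff_le_comap, LinearMap.ker_comp]
  have hi' : i ∈ S.filter fun j => L ≤ LinearMap.ker (φ j ∘ₗ e) :=
    Finset.mem_filter.2 ⟨hi, fun x _ => hr.le (LinearMap.mem_range_self e x)⟩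
  rw [defect_map he, ← (Submodule.equivMapOfInjective e he L).finrank_eq]
  simp only [hle]
  rw [Finset.filter_erase] at hk
  have hcard := Finset.card_erase_add_one hi'
  beta_reduce at hk
  omega

lemma of_linForm_mul [IsDomain A] {g : MvPolynomial (Fin m) A} {i : ι}
    (h : AdjointVanishing K S φ (linForm A (φ i) * g)) (hi : i ∈ S) (hφ : φ i ≠ 0) :
    AdjointVanishing K (S.erase i) φ g := by
  classical
  intro L k hk v hv
  rw [Finset.filter_erase] at hk
  by_cases hL : L ≤ LinearMap.ker (φ i)
  · have hi' : i ∈ S.filter fun j => L ≤ LinearMap.ker (φ j) := Finset.mem_filter.2 ⟨hi, hL⟩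
    have hcard := Finset.card_erase_add_one hi'
    exact (h L (1 + k) (by omega) v hv).of_mul (not_vanishesToOrder_two_linForm hφ _)
  · rw [Finset.erase_eq_of_notMem (by simp [hL])] at hk
    refine VanishesToOrder.of_forall_ne_zero (κ := Unit) (ψ := fun _ => φ i) (fun _ => hL)
      (fun u hu hu0 => VanishesToOrder.of_mul (j := 0) (by simpa using h L k hk u hu) ?_) hv
    rw [zero_add, vanishesToOrder_one_iff, aeval_algebraMap_linForm,
      map_eq_zero_iff _ (algebraMap 𝕜 A).injective]
    exact hu0 ()

end AdjointVanishing

/-- A nonzero form `f` of degree at most `#S - m` satisfying the vanishing conditions of the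
arrangement `φ i = 0`, `i ∈ S`, and a cone `K` on which the `φ i` are nonnegative. -/
structure IsAdjoint (K : PointedCone 𝕜 (Fin m → 𝕜)) (S : Finset ι)
    (φ : ι → Dual 𝕜 (Fin m → 𝕜)) (f : MvPolynomial (Fin m) A) : Prop where
  ne_zero : f ≠ 0
  form_ne_zero : ∀ i ∈ S, φ i ≠ 0
  form_nonneg : ∀ i ∈ S, ∀ x ∈ K, 0 ≤ φ i x
  exists_isHomogeneous : ∃ e, f.IsHomogeneous e ∧ e + m ≤ S.card
  vanishing : AdjointVanishing K S φ f

namespace IsAdjoint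

variable {S : Finset ι}

lemma nonempty {K : PointedCone 𝕜 (Fin (m + 1) → 𝕜)} {φ : ι → Dual 𝕜 (Fin (m + 1) → 𝕜)}
    {f : MvPolynomial (Fin (m + 1)) A} (h : IsAdjoint K S φ f) : S.Nonempty := by
  obtain ⟨_, _, hcard⟩ := h.exists_isHomogeneous
  exact Finset.card_pos.1 (by omega)

variable [IsDomain A]

lemma span_eq_top {K : PointedCone 𝕜 (Fin m → 𝕜)} {φ : ι → Dual 𝕜 (Fin m → 𝕜)}
    {f : MvPolynomial (Fin m) A} (h : IsAdjoint K S φ f) :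
    Submodule.span 𝕜 (K : Set (Fin m → 𝕜)) = ⊤ := by
  by_contra hne
  refine h.ne_zero (eq_of_forall_eval_algebraMap_eq (𝕜 := 𝕜) fun x => ?_)
  have hdefect : defect K ⊤ = 1 := by simp [defect, hne]
  have := h.vanishing ⊤ 1 (by simp [hdefect]; omega) x trivial
  simpa [aeval_eq_eval] using vanishesToOrder_one_iff.1 this

lemma mem_cone_of_dim_one {K : PointedCone 𝕜 (Fin 1 → 𝕜)} {φ : ι → Dual 𝕜 (Fin 1 → 𝕜)}
    {f : MvPolynomial (Fin 1) A} (h : IsAdjoint K S φ f) {w : Fin 1 → 𝕜}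
    (hw : ∀ i ∈ S, 0 ≤ φ i w) : w ∈ K := by
  obtain ⟨i, hi⟩ := h.nonempty
  obtain ⟨x, hx, hxi⟩ : ∃ x ∈ K, φ i x ≠ 0 := by
    by_contra! H
    refine h.form_ne_zero i hi (LinearMap.ker_eq_top.1 (top_le_iff.1 ?_))
    rw [← h.span_eq_top]
    exact Submodule.span_le.2 H
  have hinj : LinearMap.ker (φ i) = ⊥ := Submodule.finrank_eq_zero.1 <| by
    simpa using Module.Dual.finrank_ker_add_one_of_ne_zero (h.form_ne_zero i hi)
  have hwx : w = (φ i w / φ i x) • x := LinearMap.ker_eq_bot.1 hinj (by simp [hxi])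
  rw [hwx]
  exact K.smul_mem (div_nonneg (hw i hi) (h.form_nonneg i hi x hx)) hx

section

variable {K : PointedCone 𝕜 (Fin m → 𝕜)} {φ : ι → Dual 𝕜 (Fin m → 𝕜)}

lemma not_ker_le_ker {f : MvPolynomial (Fin m) A} (h : IsAdjoint K S φ f) {i j : ι} (hi : i ∈ S)
    (hj : j ∈ S) (hij : i ≠ j) (hdvd : ¬ linForm A (φ i) ∣ f) :
    ¬ LinearMap.ker (φ i) ≤ LinearMap.ker (φ j) := by
  classical
  exact fun hle => hdvd <| h.vanishing.linForm_dvd (T := {i, j}) (h.form_ne_zero i hi)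
    (Finset.insert_subset hi (Finset.singleton_subset_iff.2 hj)) (by simp [hle])
    (by rw [Finset.card_pair hij]; omega)

variable [DecidableEq ι]

lemma of_linForm_mul {g : MvPolynomial (Fin m) A} {i : ι}
    (h : IsAdjoint K S φ (linForm A (φ i) * g)) (hi : i ∈ S) : IsAdjoint K (S.erase i) φ g where
  ne_zero := right_ne_zero_of_mul h.ne_zero
  form_ne_zero j hj := h.form_ne_zero j (Finset.mem_of_mem_erase hj)
  form_nonneg j hj := h.form_nonneg j (Finset.mem_of_mem_erase hj)
  exists_isHomogeneous := by
    obtain ⟨_, hfe, hcard⟩ := h.exists_isHomogeneous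
    obtain ⟨e, rfl, hg⟩ := isHomogeneous_of_mul_left (isHomogeneous_linForm A _) hfe h.ne_zero
    exact ⟨e, hg, by rw [Finset.card_erase_of_mem hi]; omega⟩
  vanishing := h.vanishing.of_linForm_mul hi (h.form_ne_zero i hi)

lemma exists_eq_mul_prod {f : MvPolynomial (Fin m) A} (h : IsAdjoint K S φ f) {T : Finset ι}
    (hT : T ⊆ S) (hdefect : ∀ j ∈ T, defect K (LinearMap.ker (φ j)) = 1) :
    ∃ g, f = g * ∏ j ∈ T, linForm A (φ j) ∧ IsAdjoint K (S \ T) φ g := by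
  induction T using Finset.induction_on with
  | empty => exact ⟨f, by simp, by simpa using h⟩
  | insert j T hj ih =>
    obtain ⟨g, rfl, hg⟩ := ih ((Finset.subset_insert j T).trans hT) fun i hi =>
      hdefect i (Finset.mem_insert_of_mem hi)
    have hjS : j ∈ S \ T := Finset.mem_sdiff.2 ⟨hT (Finset.mem_insert_self j T), hj⟩
    obtain ⟨g', rfl⟩ := hg.vanishing.linForm_dvd (hg.form_ne_zero j hjS)
      (Finset.singleton_subset_iff.2 hjS) (by simp)
      (by simp [hdefect j (Finset.mem_insert_self j T)])
    refine ⟨g', by rw [Finset.prod_insert hj]; ring, ?_⟩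
    rw [Finset.sdiff_insert]
    exact hg.of_linForm_mul hjS

end

lemma subst [DecidableEq ι] {K : PointedCone 𝕜 (Fin (m + 1) → 𝕜)}
    {φ : ι → Dual 𝕜 (Fin (m + 1) → 𝕜)} {f : MvPolynomial (Fin (m + 1)) A}
    (h : IsAdjoint K S φ f) {i : ι} (hi : i ∈ S) (hdvd : ¬ linForm A (φ i) ∣ f)
    {e : (Fin m → 𝕜) →ₗ[𝕜] (Fin (m + 1) → 𝕜)}
    (he : Function.Injective e) (hr : LinearMap.range e = LinearMap.ker (φ i)) :
    IsAdjoint (K.comap e) (S.erase i) (fun j => φ j ∘ₗ e) (subst e f) where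
  ne_zero h0 := hdvd ((linForm_dvd_iff_subst_eq_zero he hr).2 h0)
  form_ne_zero j hj h0 := by
    refine h.not_ker_le_ker hi (Finset.mem_of_mem_erase hj) (Finset.ne_of_mem_erase hj).symm hdvd ?_
    rwa [← hr, LinearMap.range_le_ker_iff]
  form_nonneg j hj x hx := h.form_nonneg j (Finset.mem_of_mem_erase hj) (e x) hx
  exists_isHomogeneous := by
    obtain ⟨d, hf, hd⟩ := h.exists_isHomogeneous
    exact ⟨d, isHomogeneous_subst e hf, by rw [Finset.card_erase_of_mem hi]; omega⟩
  vanishing := h.vanishing.subst hi he hr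

/-- Divide by the forms that divide `f`. When none is left, restriction to the hyperplanes shows by
induction that `K` contains the boundary of the polyhedral cone, hence all of it. -/
theorem mem_cone {K : PointedCone 𝕜 (Fin m → 𝕜)} {φ : ι → Dual 𝕜 (Fin m → 𝕜)}
    {f : MvPolynomial (Fin m) A} (h : IsAdjoint K S φ f) {w : Fin m → 𝕜}
    (hw : ∀ i ∈ S, 0 ≤ φ i w) : w ∈ K := by
  classical
  induction m generalizing S with
  | zero => exact Subsingleton.elim 0 w ▸ zero_mem K
  | succ m ihm =>
    induction S using Finset.strongInduction generalizing f with
    | H S ihS =>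
    by_cases hdvd : ∃ i ∈ S, linForm A (φ i) ∣ f
    · obtain ⟨i, hi, g, rfl⟩ := hdvd
      exact ihS _ (Finset.erase_ssubset hi) (h.of_linForm_mul hi) fun j hj =>
        hw j (Finset.mem_of_mem_erase hj)
    push Not at hdvd
    have hboundary : ∀ x, (∀ j ∈ S, 0 ≤ φ j x) → (∃ i ∈ S, φ i x = 0) → x ∈ K := by
      rintro x hx ⟨i, hi, hix⟩
      obtain ⟨e, he, hr⟩ := exists_param_ker (h.form_ne_zero i hi)
      obtain ⟨y, rfl⟩ := hr.ge hix
      exact ihm (h.subst hi (hdvd i hi) he hr) fun j hj => hx j (Finset.mem_of_mem_erase hj)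
    obtain rfl | hm := Nat.eq_zero_or_pos m
    · exact h.mem_cone_of_dim_one hw
    obtain ⟨_, _, hcard⟩ := h.exists_isHomogeneous
    obtain ⟨i, hi, j, hj, hij⟩ := Finset.one_lt_card.1 (by omega : 1 < S.card)
    obtain ⟨z, hiz, hjz⟩ := exists_pos_neg_of_not_ker_le_ker
      (h.not_ker_le_ker hi hj hij (hdvd i hi)) (h.not_ker_le_ker hj hi hij.symm (hdvd j hj))
    exact mem_of_forall_boundary_mem hboundary ⟨i, hi, hiz⟩ ⟨j, hj, hjz⟩ hw

end IsAdjoint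

end AdjointPolynomials

section PolytopeCone

section

variable {R E ι : Type*} [CommSemiring R] [AddCommMonoid E] [Module R E]

/-- The intersection of the kernels of the forms `φ i` with `i ∈ S`. For the facet forms of a
polytope it is the linear subspace underlying the flat of the arrangement cut out by `S`. -/
def commonKer (φ : ι → Dual R E) (S : Finset ι) : Submodule R E :=
  (Submodule.span R (φ '' S)).dualCoannihilator

lemma mem_commonKer {φ : ι → Dual R E} {S : Finset ι} {x : E} :
    x ∈ commonKer φ S ↔ ∀ i ∈ S, φ i x = 0 := by
  simp [commonKer, ← SetLike.mem_coe, Submodule.coe_dualCoannihilator_span]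

lemma commonKer_singleton (φ : ι → Dual R E) (i : ι) : commonKer φ {i} = LinearMap.ker (φ i) := by
  ext x
  simp [mem_commonKer]

/-- The cone on which all the forms `φ i` are nonnegative. For the facet forms of a polytope it is
the cone over the polytope. -/
def coneOf [PartialOrder R] [IsOrderedRing R] (φ : ι → Dual R E) : PointedCone R E :=
  PointedCone.dual LinearMap.id (Set.range φ)

lemma mem_coneOf [PartialOrder R] [IsOrderedRing R] {φ : ι → Dual R E} {x : E} :
    x ∈ coneOf φ ↔ ∀ i, 0 ≤ φ i x := by
  simp [coneOf]

end

lemma rkOf_add_finrank_commonKer {n d : ℕ} (φ : Fin d → Dual ℝ (Fin (n + 1) → ℝ))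
    (S : Finset (Fin d)) : rkOf (linForm ℝ ∘ φ) S + finrank ℝ (commonKer φ S) = n + 1 := by
  rw [rkOf, Set.image_comp, ← Submodule.map_span,
    ← (Submodule.equivMapOfInjective _ (linForm_injective Function.injective_id) _).finrank_eq,
    commonKer, Subspace.finrank_add_finrank_dualCoannihilator_eq, finrank_fin_fun]

lemma rkOf_le_card {n d : ℕ} (ℓ : Fin d → MvPolynomial (Fin (n + 1)) ℝ) (S : Finset (Fin d)) :
    rkOf ℓ S ≤ S.card := by
  classical
  rw [rkOf, ← Finset.coe_image]
  exact (finrank_span_finset_le_card _).trans Finset.card_image_le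

/-- The embedding of `ℝⁿ` as the hyperplane at infinity of the homogeneous coordinate space. -/
def consZero (n : ℕ) : (Fin n → ℝ) →ₗ[ℝ] (Fin (n + 1) → ℝ) :=
  (Fin.consLinearEquiv ℝ fun _ => ℝ).toLinearMap ∘ₗ LinearMap.inr ℝ ℝ (Fin n → ℝ)

lemma consZero_apply {n : ℕ} (y : Fin n → ℝ) : consZero n y = Fin.cons 0 y := rfl

lemma consZero_injective (n : ℕ) : Function.Injective (consZero n) :=
  Fin.cons_right_injective (α := fun _ => ℝ) 0

lemma lift1_add_smul {n : ℕ} (p y : Fin n → ℝ) (t : ℝ) :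
    lift1 (p + t • y) = lift1 p + t • consZero n y := by
  ext i
  cases i using Fin.cases <;> simp [lift1, consZero_apply]

lemma lift1_sub_lift1 {n : ℕ} (p q : Fin n → ℝ) : lift1 p - lift1 q = consZero n (p - q) := by
  ext i
  cases i using Fin.cases <;> simp [lift1, consZero_apply]

lemma lift1_inv_smul_tail {n : ℕ} {x : Fin (n + 1) → ℝ} (hx : x 0 ≠ 0) :
    lift1 ((x 0)⁻¹ • Fin.tail x) = (x 0)⁻¹ • x := by
  ext i
  cases i using Fin.cases <;> simp [lift1, Fin.tail, hx]

lemma span_image_lift1 {n : ℕ} {s : Set (Fin n → ℝ)} {p : Fin n → ℝ} (hp : p ∈ s) :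
    Submodule.span ℝ (lift1 '' s) = (vectorSpan ℝ s).map (consZero n) ⊔ ℝ ∙ lift1 p := by
  refine le_antisymm (Submodule.span_le.2 ?_) (sup_le ?_ ?_)
  · rintro _ ⟨q, hq, rfl⟩
    rw [SetLike.mem_coe, ← sub_add_cancel (lift1 q) (lift1 p), lift1_sub_lift1]
    exact Submodule.add_mem_sup (Submodule.mem_map_of_mem (vsub_mem_vectorSpan ℝ hq hp))
      (Submodule.mem_span_singleton_self _)
  · rw [Submodule.map_le_iff_le_comap, vectorSpan_def, Submodule.span_le]
    rintro _ ⟨q, hq, r, hr, rfl⟩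
    simp only [SetLike.mem_coe, Submodule.mem_comap, vsub_eq_sub, ← lift1_sub_lift1]
    exact sub_mem (Submodule.subset_span ⟨q, hq, rfl⟩) (Submodule.subset_span ⟨r, hr, rfl⟩)
  · rw [Submodule.span_singleton_le_iff_mem]
    exact Submodule.subset_span ⟨p, hp, rfl⟩

lemma disjoint_map_consZero {n : ℕ} (M : Submodule ℝ (Fin n → ℝ)) (p : Fin n → ℝ) :
    Disjoint (M.map (consZero n)) (ℝ ∙ lift1 p) := by
  rw [Submodule.disjoint_def]
  rintro _ ⟨y, -, rfl⟩ hy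
  obtain ⟨c, hc⟩ := Submodule.mem_span_singleton.1 hy
  have hc0 : c = 0 := by simpa [lift1, consZero_apply] using congrFun hc 0
  rw [← hc, hc0, zero_smul]

lemma finrank_span_image_lift1 {n : ℕ} (s : Set (Fin n → ℝ)) :
    (finrank ℝ (Submodule.span ℝ (lift1 '' s)) : ℤ) = affDim s + 1 := by
  obtain rfl | ⟨p, hp⟩ := s.eq_empty_or_nonempty
  · simp [affDim]
  have hp0 : lift1 p ≠ 0 := fun h => one_ne_zero (congrFun h 0)
  have hsum := Submodule.finrank_sup_add_finrank_inf_eq ((vectorSpan ℝ s).map (consZero n))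
    (ℝ ∙ lift1 p)
  rw [(disjoint_map_consZero _ p).eq_bot, finrank_bot, ← span_image_lift1 hp,
    finrank_span_singleton hp0,
    ← (Submodule.equivMapOfInjective _ (consZero_injective n) _).finrank_eq] at hsum
  rw [affDim, if_pos ⟨p, hp⟩, direction_affineSpan]
  exact_mod_cast hsum

variable {n d : ℕ} {φ : Fin d → Dual ℝ (Fin (n + 1) → ℝ)}

lemma mem_polytopeOf {y : Fin n → ℝ} : y ∈ polytopeOf (linForm ℝ ∘ φ) ↔ lift1 y ∈ coneOf φ := by
  simp [polytopeOf, mem_coneOf]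

lemma mem_faceOf {y : Fin n → ℝ} {S : Finset (Fin d)} :
    y ∈ faceOf (linForm ℝ ∘ φ) S ↔ lift1 y ∈ coneOf φ ∧ lift1 y ∈ commonKer φ S := by
  simp [faceOf, mem_polytopeOf, mem_commonKer]

lemma polytopeOf_nonempty (hP : IsPolytopeSetup (linForm ℝ ∘ φ)) :
    (polytopeOf (linForm ℝ ∘ φ)).Nonempty :=
  AffineSubspace.nonempty_of_affineSpan_eq_top ℝ _ _ hP.full

lemma polytopeOf_nontrivial (hP : IsPolytopeSetup (linForm ℝ ∘ φ)) :
    (polytopeOf (linForm ℝ ∘ φ)).Nontrivial := by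
  rw [← Set.not_subsingleton_iff]
  intro hs
  have : Nonempty (Fin n) := ⟨⟨0, hP.one_le⟩⟩
  exact not_subsingleton (Fin n → ℝ)
    (AffineSubspace.subsingleton_of_subsingleton_span_eq_top hs hP.full)

lemma eq_zero_of_consZero_mem_coneOf (hP : IsPolytopeSetup (linForm ℝ ∘ φ)) {y : Fin n → ℝ}
    (hy : consZero n y ∈ coneOf φ) : y = 0 := by
  obtain ⟨p, hp⟩ := polytopeOf_nonempty hP
  obtain ⟨R, hR⟩ := hP.compact.isBounded.exists_norm_le
  by_contra hne
  have hnorm : 0 < ‖y‖ := norm_pos_iff.2 hne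
  have hray : ∀ t : ℝ, 0 ≤ t → t * ‖y‖ ≤ R + ‖p‖ := fun t ht => by
    have hmem : p + t • y ∈ polytopeOf (linForm ℝ ∘ φ) := by
      rw [mem_polytopeOf, lift1_add_smul]
      exact add_mem (mem_polytopeOf.1 hp) ((coneOf φ).smul_mem ht hy)
    calc t * ‖y‖ = ‖(p + t • y) - p‖ := by
          rw [add_sub_cancel_left, norm_smul, Real.norm_of_nonneg ht]
      _ ≤ ‖p + t • y‖ + ‖p‖ := norm_sub_le _ _
      _ ≤ R + ‖p‖ := by gcongr; exact hR _ hmem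
  have hR0 : 0 ≤ R := (norm_nonneg p).trans (hR p hp)
  have := hray ((R + ‖p‖ + 1) / ‖y‖) (by positivity)
  rw [div_mul_cancel₀ _ hnorm.ne'] at this
  linarith

lemma eq_zero_of_mem_coneOf (hP : IsPolytopeSetup (linForm ℝ ∘ φ)) {x : Fin (n + 1) → ℝ}
    (hx : x ∈ coneOf φ) (hx0 : x 0 = 0) : x = 0 := by
  have hcons : x = consZero n (Fin.tail x) := by
    rw [consZero_apply, ← hx0, Fin.cons_self_tail]
  rw [hcons] at hx ⊢
  rw [eq_zero_of_consZero_mem_coneOf hP hx, map_zero]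

lemma zero_lt_of_mem_coneOf (hP : IsPolytopeSetup (linForm ℝ ∘ φ)) {x : Fin (n + 1) → ℝ}
    (hx : x ∈ coneOf φ) (hx0 : x ≠ 0) : 0 < x 0 := by
  by_contra hneg
  have hlt : x 0 < 0 := lt_of_le_of_ne (not_lt.1 hneg) (mt (eq_zero_of_mem_coneOf hP hx) hx0)
  have hsmul : ∀ p ∈ polytopeOf (linForm ℝ ∘ φ), x 0 • lift1 p = x := fun p hp => by
    have hmem : x + (-x 0) • lift1 p ∈ coneOf φ :=
      add_mem hx ((coneOf φ).smul_mem (by linarith) (mem_polytopeOf.1 hp))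
    have := eq_zero_of_mem_coneOf hP hmem (by simp [lift1])
    rwa [neg_smul, ← sub_eq_add_neg, sub_eq_zero, eq_comm] at this
  obtain ⟨p, hp, q, hq, hpq⟩ := polytopeOf_nontrivial hP
  have hlift : lift1 p = lift1 q :=
    smul_right_injective _ hlt.ne ((hsmul p hp).trans (hsmul q hq).symm)
  exact hpq (Fin.cons_right_injective (α := fun _ => ℝ) 1 hlift)

lemma span_coneOf_inter_commonKer (hP : IsPolytopeSetup (linForm ℝ ∘ φ)) (S : Finset (Fin d)) :
    Submodule.span ℝ ((coneOf φ : Set (Fin (n + 1) → ℝ)) ∩ commonKer φ S) =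
      Submodule.span ℝ (lift1 '' faceOf (linForm ℝ ∘ φ) S) := by
  refine le_antisymm (Submodule.span_le.2 ?_) (Submodule.span_mono ?_)
  · rintro x ⟨hx, hxS⟩
    obtain rfl | hx0 := eq_or_ne x 0
    · exact zero_mem _
    have hpos := zero_lt_of_mem_coneOf hP hx hx0
    have hlift := lift1_inv_smul_tail hpos.ne'
    rw [SetLike.mem_coe, ← smul_inv_smul₀ hpos.ne' x, ← hlift]
    refine Submodule.smul_mem _ _ (Submodule.subset_span ⟨_, mem_faceOf.2 ?_, rfl⟩)
    rw [hlift]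
    exact ⟨(coneOf φ).smul_mem (inv_nonneg.2 hpos.le) hx, (commonKer φ S).smul_mem _ hxS⟩
  · rintro _ ⟨y, hy, rfl⟩
    exact mem_faceOf.1 hy

lemma span_coneOf_inter_commonKer_eq_iff (hP : IsPolytopeSetup (linForm ℝ ∘ φ))
    (S : Finset (Fin d)) :
    Submodule.span ℝ ((coneOf φ : Set (Fin (n + 1) → ℝ)) ∩ commonKer φ S) = commonKer φ S ↔
      affDim (faceOf (linForm ℝ ∘ φ) S) = (n : ℤ) - rkOf (linForm ℝ ∘ φ) S := by
  have hle : Submodule.span ℝ ((coneOf φ : Set (Fin (n + 1) → ℝ)) ∩ commonKer φ S) ≤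
      commonKer φ S := Submodule.span_le.2 Set.inter_subset_right
  have hface := finrank_span_image_lift1 (faceOf (linForm ℝ ∘ φ) S)
  have hrank := rkOf_add_finrank_commonKer φ S
  rw [← span_coneOf_inter_commonKer hP] at hface
  refine ⟨fun h => ?_, fun h => Submodule.eq_of_le_of_finrank_eq hle (by omega)⟩
  rw [h] at hface
  omega

lemma commonKer_univ (hP : IsPolytopeSetup (linForm ℝ ∘ φ)) : commonKer φ Finset.univ = ⊥ := by
  refine (Submodule.eq_bot_iff _).2 fun x hx => ?_
  simp only [mem_commonKer, Finset.mem_univ, forall_const] at hx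
  by_contra hx0
  have hpos := zero_lt_of_mem_coneOf hP (mem_coneOf.2 fun i => (hx i).ge) hx0
  have hneg := zero_lt_of_mem_coneOf hP (x := -x) (mem_coneOf.2 fun i => by simp [hx])
    (neg_ne_zero.2 hx0)
  exact lt_asymm hpos (by simpa using hneg)

lemma rkOf_univ (hP : IsPolytopeSetup (linForm ℝ ∘ φ)) :
    rkOf (linForm ℝ ∘ φ) Finset.univ = n + 1 := by
  have hrank := rkOf_add_finrank_commonKer φ Finset.univ
  rwa [commonKer_univ hP, finrank_bot, add_zero] at hrank

lemma succ_le_card (hP : IsPolytopeSetup (linForm ℝ ∘ φ)) : n + 1 ≤ d := by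
  simpa [rkOf_univ hP] using rkOf_le_card (linForm ℝ ∘ φ) Finset.univ

lemma form_ne_zero (hP : IsPolytopeSetup (linForm ℝ ∘ φ)) (i : Fin d) : φ i ≠ 0 := fun h =>
  hP.ne_zero i (by simp [h])

lemma not_ker_le_ker (hP : IsPolytopeSetup (linForm ℝ ∘ φ)) {i j : Fin d} (hij : i ≠ j) :
    ¬ LinearMap.ker (φ i) ≤ LinearMap.ker (φ j) := fun hle => by
  obtain ⟨c, hc⟩ := Submodule.mem_span_singleton.1 (mem_span_singleton_of_ker_le_ker hle)
  exact hP.not_proportional i j hij c (by simp [← hc])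

lemma faceOf_singleton (ℓ : Fin d → MvPolynomial (Fin (n + 1)) ℝ) (i : Fin d) :
    faceOf ℓ {i} = facetOf ℓ i := by
  simp [faceOf, facetOf]

lemma faceOf_pair (ℓ : Fin d → MvPolynomial (Fin (n + 1)) ℝ) (i j : Fin d) :
    faceOf ℓ {i, j} = facetOf ℓ j ∩ facetOf ℓ i := by
  ext y
  simp [faceOf, facetOf]
  tauto

lemma span_coneOf_inter_ker (hP : IsPolytopeSetup (linForm ℝ ∘ φ)) (i : Fin d) :
    Submodule.span ℝ ((coneOf φ : Set (Fin (n + 1) → ℝ)) ∩ LinearMap.ker (φ i)) =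
      LinearMap.ker (φ i) := by
  have hrank := rkOf_add_finrank_commonKer φ {i}
  have hker := Module.Dual.finrank_ker_add_one_of_ne_zero (form_ne_zero hP i)
  rw [finrank_fin_fun] at hker
  rw [← commonKer_singleton] at hker ⊢
  rw [span_coneOf_inter_commonKer_eq_iff hP, faceOf_singleton, hP.facet_dim]
  omega

lemma exists_mem_facet_interior (hP : IsPolytopeSetup (linForm ℝ ∘ φ)) (i : Fin d) :
    ∃ x, φ i x = 0 ∧ ∀ j, j ≠ i → 0 < φ j x := by
  have h : ∀ j, ∃ y ∈ coneOf φ, φ i y = 0 ∧ (j ≠ i → 0 < φ j y) := fun j => by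
    obtain rfl | hj := eq_or_ne j i
    · exact ⟨0, zero_mem _, map_zero _, fun h => absurd rfl h⟩
    by_contra! H
    refine not_ker_le_ker hP hj.symm ?_
    rw [← span_coneOf_inter_ker hP i, Submodule.span_le]
    exact fun y hy => le_antisymm (H y hy.1 hy.2).2 (mem_coneOf.1 hy.1 j)
  choose y hy hyi hyj using h
  refine ⟨∑ j, y j, by simp [hyi], fun j hj => ?_⟩
  rw [map_sum]
  exact Finset.sum_pos' (fun k _ => mem_coneOf.1 (hy k) j) ⟨j, Finset.mem_univ j, hyj j hj⟩

/-- Leaving the polytope through the relative interior of a facet violates only one inequality. -/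
lemma exists_forall_ne_nonneg_and_neg (hP : IsPolytopeSetup (linForm ℝ ∘ φ)) (i : Fin d) :
    ∃ x, (∀ j, j ≠ i → 0 ≤ φ j x) ∧ φ i x < 0 := by
  obtain ⟨x, hxi, hx⟩ := exists_mem_facet_interior hP i
  obtain ⟨z, hz⟩ : ∃ z, φ i z = -1 := (LinearMap.surjective (form_ne_zero hP i)) (-1)
  by_cases hexit : ∃ j ∈ Finset.univ.erase i, φ j z < 0
  · obtain ⟨t, ht, hnonneg, j, hj, hzero⟩ := exists_exit (w := x)
      (fun j hj => (hx j (Finset.ne_of_mem_erase hj)).le) hexit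
    have ht0 : t ≠ 0 := by
      rintro rfl
      exact (hx j (Finset.ne_of_mem_erase hj)).ne' (by simpa using hzero)
    refine ⟨x + t • z, fun j hj => hnonneg j (by simp [hj]), ?_⟩
    simpa [hxi, hz] using ht.lt_of_ne' ht0
  · push Not at hexit
    refine ⟨x + z, fun j hj => ?_, by simp [hxi, hz]⟩
    rw [map_add]
    exact add_nonneg (hx j hj).le (hexit j (by simp [hj]))

end PolytopeCone

section VanishingOrders

variable {n d : ℕ} {φ : Fin d → Dual ℝ (Fin (n + 1) → ℝ)}

lemma mem_flatOf {x : Fin (n + 1) → ℝ} {i : Fin d} :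
    i ∈ flatOf (linForm ℝ ∘ φ) (algebraMap ℝ ℂ ∘ x) ↔ φ i x = 0 := by
  simp [flatOf, -Complex.coe_algebraMap]

lemma ordOf_eq (hP : IsPolytopeSetup (linForm ℝ ∘ φ)) (v : Fin (n + 1) → ℂ) :
    ordOf (linForm ℝ ∘ φ) v =
      (flatOf (linForm ℝ ∘ φ) v).card - rkOf (linForm ℝ ∘ φ) (flatOf (linForm ℝ ∘ φ) v) +
        defect (coneOf φ) (commonKer φ (flatOf (linForm ℝ ∘ φ) v)) := by
  simp only [ordOf, defect, span_coneOf_inter_commonKer_eq_iff hP]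
  split_ifs <;> rfl

lemma ordOf_zero (hP : IsPolytopeSetup (linForm ℝ ∘ φ)) :
    ordOf (linForm ℝ ∘ φ) (0 : Fin (n + 1) → ℂ) = d - n - 1 := by
  have hflat : flatOf (linForm ℝ ∘ φ) (0 : Fin (n + 1) → ℂ) = Finset.univ := by
    have hzero : (0 : Fin (n + 1) → ℂ) = algebraMap ℝ ℂ ∘ (0 : Fin (n + 1) → ℝ) := by
      ext
      simp
    ext i
    simp only [hzero, mem_flatOf, map_zero, Finset.mem_univ]
  rw [ordOf_eq hP, hflat, rkOf_univ hP, commonKer_univ hP, defect_bot, Finset.card_univ,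
    Fintype.card_fin, add_zero, Nat.sub_sub]

lemma vanishesToOrder_ordOf (hP : IsPolytopeSetup (linForm ℝ ∘ φ))
    {f : MvPolynomial (Fin (n + 1)) ℂ} (hf : f.IsHomogeneous (d - n - 1))
    (hvan : ∀ v : Fin (n + 1) → ℝ, v ≠ 0 →
      f ∈ pointIdeal (algebraMap ℝ ℂ ∘ v) ^ ordOf (linForm ℝ ∘ φ) (algebraMap ℝ ℂ ∘ v))
    (v : Fin (n + 1) → ℝ) :
    VanishesToOrder (ordOf (linForm ℝ ∘ φ) (algebraMap ℝ ℂ ∘ v)) f (algebraMap ℝ ℂ ∘ v) := by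
  obtain rfl | hv := eq_or_ne v 0
  · have hzero : algebraMap ℝ ℂ ∘ (0 : Fin (n + 1) → ℝ) = 0 := by ext; simp
    rw [hzero, ordOf_zero hP]
    exact vanishesToOrder_zero_of_isHomogeneous hf
  · exact vanishesToOrder_of_mem_pointIdeal_pow (hvan v hv)

lemma adjointVanishing_of_vanishesToOrder_ordOf (hP : IsPolytopeSetup (linForm ℝ ∘ φ))
    {f : MvPolynomial (Fin (n + 1)) ℂ}
    (h : ∀ v : Fin (n + 1) → ℝ,
      VanishesToOrder (ordOf (linForm ℝ ∘ φ) (algebraMap ℝ ℂ ∘ v)) f (algebraMap ℝ ℂ ∘ v)) :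
    AdjointVanishing (coneOf φ) Finset.univ φ f := by
  classical
  intro L k hk v hv
  refine VanishesToOrder.of_forall_ne_zero (κ := {i // ¬ L ≤ LinearMap.ker (φ i)})
    (ψ := fun i => φ i) (fun i => i.2) (fun u hu hu0 => (h u).mono ?_) hv
  set T := flatOf (linForm ℝ ∘ φ) (algebraMap ℝ ℂ ∘ u) with hTu
  have hT : (Finset.univ.filter fun i => L ≤ LinearMap.ker (φ i)) = T := by
    ext i
    rw [mem_flatOf, Finset.mem_filter_univ]
    exact ⟨fun hi => hi hu, fun hi => by_contra fun hL => hu0 ⟨i, hL⟩ hi⟩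
  have hL : L ≤ commonKer φ T := fun x hx => mem_commonKer.2 fun i hi => by
    rw [← hT, Finset.mem_filter_univ] at hi
    exact hi hx
  have hmono := finrank_add_defect_mono (coneOf φ) hL
  have hrank := rkOf_add_finrank_commonKer φ T
  have hcard : k + (n + 1) ≤ T.card + finrank ℝ L + defect (coneOf φ) L := by
    rw [← hT]
    convert hk
  rw [ordOf_eq hP, ← hTu]
  omega

lemma isAdjoint_of_mem_pointIdeal_pow (hP : IsPolytopeSetup (linForm ℝ ∘ φ))
    {f : MvPolynomial (Fin (n + 1)) ℂ} (hf0 : f ≠ 0) (hf : f.IsHomogeneous (d - n - 1))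
    (hvan : ∀ v : Fin (n + 1) → ℝ, v ≠ 0 →
      f ∈ pointIdeal (algebraMap ℝ ℂ ∘ v) ^ ordOf (linForm ℝ ∘ φ) (algebraMap ℝ ℂ ∘ v)) :
    IsAdjoint (coneOf φ) Finset.univ φ f where
  ne_zero := hf0
  form_ne_zero i _ := form_ne_zero hP i
  form_nonneg i _ x hx := mem_coneOf.1 hx i
  exists_isHomogeneous := by
    have := succ_le_card hP
    exact ⟨d - n - 1, hf, by rw [Finset.card_univ, Fintype.card_fin]; omega⟩
  vanishing := adjointVanishing_of_vanishesToOrder_ordOf hP (vanishesToOrder_ordOf hP hf hvan)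

/-- Otherwise the quotient would be an adjoint of the arrangement without the `i`-th facet, whose
cone is strictly larger. -/
lemma not_linForm_dvd_of_isAdjoint (hP : IsPolytopeSetup (linForm ℝ ∘ φ))
    {f : MvPolynomial (Fin (n + 1)) ℂ} (h : IsAdjoint (coneOf φ) Finset.univ φ f) (i : Fin d) :
    ¬ linForm ℂ (φ i) ∣ f := by
  rintro ⟨g, rfl⟩
  obtain ⟨x, hx, hxi⟩ := exists_forall_ne_nonneg_and_neg hP i
  have hxK := (h.of_linForm_mul (Finset.mem_univ i)).mem_cone fun j hj =>
    hx j (Finset.ne_of_mem_erase hj)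
  exact hxi.not_ge (mem_coneOf.1 hxK i)

end VanishingOrders

section Facet

variable {n d : ℕ} {φ : Fin d → Dual ℝ (Fin (n + 1) → ℝ)} {i : Fin d}

lemma mem_nonIncident {ℓ : Fin d → MvPolynomial (Fin (n + 1)) ℝ} {j : Fin d} :
    j ∈ nonIncident ℓ i ↔ j ≠ i ∧ affDim (faceOf ℓ {i, j}) ≠ (n : ℤ) - 2 := by
  classical
  rw [nonIncident, Finset.mem_filter, faceOf_pair, Incident]
  simp only [Finset.mem_univ, true_and]
  tauto

lemma mem_facetFlatOf {ℓ : Fin d → MvPolynomial (Fin (n + 1)) ℝ} {j : Fin d}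
    {v : Fin (n + 1) → ℂ} :
    j ∈ facetFlatOf ℓ i v ↔ j ≠ i ∧ j ∉ nonIncident ℓ i ∧ aeval v (ℓ j) = 0 := by
  classical
  rw [facetFlatOf, Finset.mem_filter, nonIncident, Finset.mem_filter, Incident]
  simp only [Finset.mem_univ, true_and]
  tauto

lemma map_ker_comp_eq_commonKer {j : Fin d} {e : (Fin n → ℝ) →ₗ[ℝ] (Fin (n + 1) → ℝ)}
    (hr : LinearMap.range e = LinearMap.ker (φ i)) :
    (LinearMap.ker (φ j ∘ₗ e)).map e = commonKer φ {i, j} := by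
  rw [LinearMap.ker_comp, Submodule.map_comap_eq, hr]
  ext x
  simp [mem_commonKer]

lemma defect_of_mem_nonIncident (hP : IsPolytopeSetup (linForm ℝ ∘ φ)) {j : Fin d}
    (hj : j ∈ nonIncident (linForm ℝ ∘ φ) i) {e : (Fin n → ℝ) →ₗ[ℝ] (Fin (n + 1) → ℝ)}
    (he : Function.Injective e) (hr : LinearMap.range e = LinearMap.ker (φ i)) :
    defect ((coneOf φ).comap e) (LinearMap.ker (φ j ∘ₗ e)) = 1 := by
  obtain ⟨hji, hdim⟩ := mem_nonIncident.1 hj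
  have h0 : φ j ∘ₗ e ≠ 0 := fun h0 => not_ker_le_ker hP hji.symm <| by
    rwa [← hr, LinearMap.range_le_ker_iff]
  have hfin : finrank ℝ (commonKer φ {i, j}) + 1 = n := by
    rw [← map_ker_comp_eq_commonKer hr, ← (Submodule.equivMapOfInjective e he _).finrank_eq,
      Module.Dual.finrank_ker_add_one_of_ne_zero h0, finrank_fin_fun]
  have hrank := rkOf_add_finrank_commonKer φ {i, j}
  rw [← defect_map he, map_ker_comp_eq_commonKer hr, defect, if_neg]
  rw [span_coneOf_inter_commonKer_eq_iff hP]
  exact fun h => hdim (by rw [h]; omega)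

lemma facetOrdOf_add_le (hP : IsPolytopeSetup (linForm ℝ ∘ φ)) (i : Fin d)
    (v : Fin (n + 1) → ℂ) :
    facetOrdOf (linForm ℝ ∘ φ) i v + n ≤ (facetFlatOf (linForm ℝ ∘ φ) i v).card +
      finrank ℝ (commonKer φ (insert i (facetFlatOf (linForm ℝ ∘ φ) i v))) +
      defect (coneOf φ) (commonKer φ (insert i (facetFlatOf (linForm ℝ ∘ φ) i v))) := by
  set F := facetFlatOf (linForm ℝ ∘ φ) i v with hF
  have hiF : i ∉ F := fun h => (mem_facetFlatOf.1 h).1 rfl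
  have hrank := rkOf_add_finrank_commonKer φ (insert i F)
  have hcard := rkOf_le_card (linForm ℝ ∘ φ) (insert i F)
  rw [Finset.card_insert_of_notMem hiF] at hcard
  have hker := Module.Dual.finrank_ker_add_one_of_ne_zero (form_ne_zero hP i)
  rw [finrank_fin_fun] at hker
  have hle : commonKer φ (insert i F) ≤ LinearMap.ker (φ i) := fun x hx =>
    mem_commonKer.1 hx i (Finset.mem_insert_self i F)
  have hfin := Submodule.finrank_mono hle
  have hfacetRk : facetRkOf (linForm ℝ ∘ φ) i v + 1 = rkOf (linForm ℝ ∘ φ) (insert i F) := by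
    rw [facetRkOf, ← hF]
    omega
  have hcond : (affDim (faceOf (linForm ℝ ∘ φ) (insert i F)) =
      (n : ℤ) - 1 - facetRkOf (linForm ℝ ∘ φ) i v) ↔ affDim (faceOf (linForm ℝ ∘ φ) (insert i F)) =
      (n : ℤ) - rkOf (linForm ℝ ∘ φ) (insert i F) := by
    rw [← hfacetRk]
    constructor <;> intro h <;> rw [h] <;> push_cast <;> ring
  simp only [facetOrdOf, defect, ← hF, hcond, span_coneOf_inter_commonKer_eq_iff hP]
  split_ifs <;> omega

lemma exists_subst_eq_mul_prod_nonIncident (hP : IsPolytopeSetup (linForm ℝ ∘ φ))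
    {f : MvPolynomial (Fin (n + 1)) ℂ} (h : IsAdjoint (coneOf φ) Finset.univ φ f)
    {e : (Fin n → ℝ) →ₗ[ℝ] (Fin (n + 1) → ℝ)} (he : Function.Injective e)
    (hr : LinearMap.range e = LinearMap.ker (φ i)) :
    ∃ g, subst e f = g * ∏ j ∈ nonIncident (linForm ℝ ∘ φ) i, linForm ℂ (φ j ∘ₗ e) ∧
      IsAdjoint ((coneOf φ).comap e) (Finset.univ.erase i \ nonIncident (linForm ℝ ∘ φ) i)
        (fun j => φ j ∘ₗ e) g :=
  (h.subst (Finset.mem_univ i) (not_linForm_dvd_of_isAdjoint hP h i) he hr).exists_eq_mul_prod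
    (fun _ hj => Finset.mem_erase.2 ⟨(mem_nonIncident.1 hj).1, Finset.mem_univ _⟩)
    fun _ hj => defect_of_mem_nonIncident hP hj he hr

lemma vanishesToOrder_facetOrdOf (hP : IsPolytopeSetup (linForm ℝ ∘ φ))
    {e : (Fin n → ℝ) →ₗ[ℝ] (Fin (n + 1) → ℝ)} (he : Function.Injective e)
    (hr : LinearMap.range e = LinearMap.ker (φ i)) {g : MvPolynomial (Fin n) ℂ}
    (hg : AdjointVanishing ((coneOf φ).comap e)
      (Finset.univ.erase i \ nonIncident (linForm ℝ ∘ φ) i) (fun j => φ j ∘ₗ e) g)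
    {v : Fin (n + 1) → ℂ} {y : Fin n → ℝ}
    (hy : e y ∈ commonKer φ (insert i (facetFlatOf (linForm ℝ ∘ φ) i v))) :
    VanishesToOrder (facetOrdOf (linForm ℝ ∘ φ) i v) g (algebraMap ℝ ℂ ∘ y) := by
  classical
  set F := facetFlatOf (linForm ℝ ∘ φ) i v with hF
  set L := commonKer φ (insert i F) with hL
  have hmap : (L.comap e).map e = L := by
    rw [Submodule.map_comap_eq, hr, inf_eq_right]
    exact fun x hx => mem_commonKer.1 hx i (Finset.mem_insert_self i F)
  refine hg (L.comap e) _ ?_ y hy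
  have hord := facetOrdOf_add_le hP i v
  rw [← hF, ← hL, ← hmap, defect_map he,
    ← (Submodule.equivMapOfInjective e he _).finrank_eq] at hord
  refine hord.trans (Nat.add_le_add_right (Nat.add_le_add_right
    (Finset.card_le_card fun j hj => ?_) _) _)
  obtain ⟨hji, hjN, -⟩ := mem_facetFlatOf.1 hj
  refine Finset.mem_filter.2 ⟨by simp [hji, hjN], fun x hx => ?_⟩
  exact mem_commonKer.1 hx j (Finset.mem_insert_of_mem hj)

lemma subst_mem_pointIdeal_pow_facetOrdOf (hP : IsPolytopeSetup (linForm ℝ ∘ φ))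
    {e : (Fin n → ℝ) →ₗ[ℝ] (Fin (n + 1) → ℝ)} (he : Function.Injective e)
    (hr : LinearMap.range e = LinearMap.ker (φ i)) {q : (Fin (n + 1) → ℝ) →ₗ[ℝ] (Fin n → ℝ)}
    (hq : q ∘ₗ e = LinearMap.id) {g : MvPolynomial (Fin n) ℂ}
    (hg : AdjointVanishing ((coneOf φ).comap e)
      (Finset.univ.erase i \ nonIncident (linForm ℝ ∘ φ) i) (fun j => φ j ∘ₗ e) g)
    {v : Fin (n + 1) → ℂ} (hv0 : v ≠ 0) (hv : aeval v (linForm ℝ (φ i)) = 0) :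
    subst q g ∈ pointIdeal v ^ facetOrdOf (linForm ℝ ∘ φ) i v := by
  refine mem_pointIdeal_pow_of_forall_real hv0
    (S := φ '' ↑(insert i (facetFlatOf (linForm ℝ ∘ φ) i v))) ?_ fun u hu => ?_
  · rintro _ ⟨j, hj, rfl⟩
    obtain rfl | hj := Finset.mem_insert.1 hj
    · exact hv
    · exact (mem_facetFlatOf.1 hj).2.2
  · rw [Set.forall_mem_image] at hu
    obtain ⟨y, rfl⟩ := hr.ge (hu (Finset.mem_insert_self i _))
    refine VanishesToOrder.subst q ?_
    rw [← LinearMap.comp_apply, hq]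
    exact vanishesToOrder_facetOrdOf hP he hr hg (mem_commonKer.2 hu)

end Facet

end AdjointRestriction

end

open MvPolynomial AdjointRestriction in
/-- Restriction to a facet: if `f ≠ 0` has degree `d - n - 1` and vanishes to order at least
`ord_P(L_v)` at every real point `v`, then modulo `ℓ_{i₀}` it is the product of the linear forms
of the facets not incident to `F_{i₀}` and a polynomial `g` of degree `d' - n` that is nonzero on
the facet hyperplane and vanishes at each of its points `v` to order at least `ord_{P'}(L'_v)`. -/
theorem adjoint_residue_restriction {n d : ℕ}
    (ℓ : Fin d → MvPolynomial (Fin (n + 1)) ℝ) (hP : IsPolytopeSetup ℓ)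
    (f : MvPolynomial (Fin (n + 1)) ℂ) (hf0 : f ≠ 0)
    (hf : f.IsHomogeneous (d - n - 1))
    (hvan : ∀ v : Fin (n + 1) → ℝ, v ≠ 0 →
      f ∈ pointIdeal (fun i => (v i : ℂ)) ^ ordOf ℓ (fun i => (v i : ℂ)))
    (i₀ : Fin d) (d' : ℕ) (hd' : d' = d - 1 - (nonIncident ℓ i₀).card) :
    ∃ g : MvPolynomial (Fin (n + 1)) ℂ,
      g.IsHomogeneous (d' - n) ∧
      ¬ toC (ℓ i₀) ∣ g ∧
      toC (ℓ i₀) ∣ f - g * ∏ j ∈ nonIncident ℓ i₀, toC (ℓ j) ∧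
      ∀ v : Fin (n + 1) → ℂ, v ≠ 0 → aeval v (ℓ i₀) = 0 →
        RestrictionVanishes (toC (ℓ i₀)) g v (facetOrdOf ℓ i₀ v) := by
  choose φ hφ using fun i => exists_linForm_eq (hP.homogeneous i)
  obtain rfl : linForm ℝ ∘ φ = ℓ := funext hφ
  obtain ⟨e, he, hr⟩ := exists_param_ker (form_ne_zero hP i₀)
  obtain ⟨q, hq⟩ := LinearMap.exists_leftInverse_of_injective e (LinearMap.ker_eq_bot.2 he)
  have hadj := isAdjoint_of_mem_pointIdeal_pow hP hf0 hf hvan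
  have hdvd (p) := linForm_dvd_iff_subst_eq_zero (A := ℂ) (f := p) he hr
  have hfe := mt (hdvd f).2 (not_linForm_dvd_of_isAdjoint hP hadj i₀)
  obtain ⟨g, hfg, hg⟩ := exists_subst_eq_mul_prod_nonIncident hP hadj he hr
  have hqg : subst e (subst q g) = g := by rw [subst_subst, hq, subst_id]
  simp only [toC, Function.comp_apply, map_linForm]
  refine ⟨subst q g, isHomogeneous_subst q ?_, ?_, ?_, fun v hv0 hv => ?_⟩
  · have hdeg : d' - n = d - n - 1 - (nonIncident (linForm ℝ ∘ φ) i₀).card := by omega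
    exact hdeg ▸ isHomogeneous_of_mul_prod_linForm (hfg ▸ isHomogeneous_subst e hf) (hfg ▸ hfe)
  · rw [hdvd, hqg]
    exact hg.ne_zero
  · simp [hdvd, hqg, hfg]
  · rw [RestrictionVanishes, ← Ideal.map_pow]
    exact Ideal.mem_map_of_mem _
      (subst_mem_pointIdeal_pow_facetOrdOf hP he hr hq hg.vanishing hv0 hv)
end

section
/- Let $n\ge 1$ and let $\ell_1,\dots,\ell_d\in\mathbb{R}[X_0,\dots,X_n]$ be pairwise non-proportional nonzero linear forms such that $P=\{y\in\mathbb{R}^n : \ell_i(1,y)\ge 0 \text{ for all } i\}$ is compact with affine span $\mathbb{R}^n$, and such that every $F_i=\{y\in P:\ell_i(1,y)=0\}$ has dimension $n-1$; thus the $\ell_i$ are the homogenized facet equations of the full-dimensional polytope $P$, and $d\ge n+1$. Here the dimension of a subset of $\mathbb{R}^n$ is the dimension of its affine span, and $\dim\emptyset=-1$. For $0\ne v\in\mathbb{R}^{n+1}$ let $\mathcal F_v=\{i:\ell_i(v)=0\}$, let $r_v$ be the dimension of the linear span of $\{\ell_i : i\in\mathcal F_v\}$, let $P_v=\{y\in P:\ell_i(1,y)=0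 \text{ for all } i\in\mathcal F_v\}$, and set $\operatorname{ord}_P(L_v)=|\mathcal F_v|-r_v$ if $\dim P_v=n-r_v$, and $\operatorname{ord}_P(L_v)=|\mathcal F_v|-r_v+1$ otherwise. Let $I_v\subseteq\mathbb{C}[X_0,\dots,X_n]$ be the ideal generated by all linear forms vanishing at $v$. Let $f\in\mathbb{C}[X_0,\dots,X_n]$ be homogeneous of degree $d-n-1$ and satisfy $f\in I_v^{\operatorname{ord}_P(L_v)}$ for every nonzero $v\in\mathbb{R}^{n+1}$. If $i\ne j$ are indices such that the facets $F_i$ and $F_j$ are not incident, i.e. they do not meet in a face of codimension 2: $\dim(F_i\cap F_j)\ne n-2$ (so for $n\ge 2$ disjoint facets are not incident, while the two endpoints of a segment, $n=1$, are incident since they meet in the empty face, of dimension $-1$), then $f$ lies in the ideal of $\mathbb{C}[X_0,\dots,X_n]$ generated by $\ell_i$ and $\ell_j$; in particular $f$ vanishes identically on the codimension-2 linear space $\ell_i=\ell_j=0$. -/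
/-!
Let `V` be the common zero set of two independent linear forms `ℓᵢ`, `ℓⱼ`. The ideal `(ℓᵢ, ℓⱼ)` is
prime and consists of the polynomials vanishing at the real points of `V`, because it is the kernel
of the substitution given by a real linear projection onto `V`. If the facets are not incident, then
`ord_P` is positive at every nonzero `v ∈ V` where the only `ℓₖ` vanishing are those in the span of
`ℓᵢ` and `ℓⱼ`: there the rank is 2, but `P_v = Fᵢ ∩ Fⱼ` does not have dimension `n - 2`. So `f`
vanishes on `V` away from finitely many proper hyperplanes of `V`, hence on all of `V`.
-/

open MvPolynomial

noncomputable section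

namespace PolytopeAdjoint

/-- The embedding `y ↦ (1, y₁, …, yₙ)` of the affine chart. -/
def lift1 {n : ℕ} (y : Fin n → ℝ) : Fin (n + 1) → ℝ := Fin.cons 1 y

open Classical in
/-- The dimension of the affine span of a subset of `ℝⁿ`, as an integer, with the usual
convention `dim ∅ = -1`. -/
def affDim {n : ℕ} (S : Set (Fin n → ℝ)) : ℤ :=
  if S.Nonempty then (Module.finrank ℝ (affineSpan ℝ S).direction : ℤ) else -1

/-- `P = {y ∈ ℝⁿ | ℓᵢ(1,y) ≥ 0 for all i}`. -/
def polytopeOf {n d : ℕ} (ℓ : Fin d → MvPolynomial (Fin (n + 1)) ℝ) : Set (Fin n → ℝ) :=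
  {y | ∀ i, 0 ≤ eval (lift1 y) (ℓ i)}

/-- `Fᵢ = {y ∈ P | ℓᵢ(1,y) = 0}`. -/
def facetOf {n d : ℕ} (ℓ : Fin d → MvPolynomial (Fin (n + 1)) ℝ) (i : Fin d) :
    Set (Fin n → ℝ) :=
  {y ∈ polytopeOf ℓ | eval (lift1 y) (ℓ i) = 0}

/-- The linear forms `ℓ₁, …, ℓ_d` are the homogenized facet equations of a full-dimensional
compact polytope `P ⊆ ℝⁿ`. -/
structure IsFacetSystem {n d : ℕ} (ℓ : Fin d → MvPolynomial (Fin (n + 1)) ℝ) : Prop where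
  homogeneous : ∀ i, (ℓ i).IsHomogeneous 1
  ne_zero : ∀ i, ℓ i ≠ 0
  not_proportional : ∀ i j, i ≠ j → ∀ c : ℝ, c • ℓ i ≠ ℓ j
  compact : IsCompact (polytopeOf ℓ)
  full_dim : affineSpan ℝ (polytopeOf ℓ) = ⊤
  facet_dim : ∀ i, affDim (facetOf ℓ i) = (n : ℤ) - 1

/-- The facets `Fᵢ` and `Fⱼ` are incident: they meet in a face of codimension 2. The empty set
is a face, of dimension `-1`, so the two endpoints of a segment (`n = 1`) are incident. -/
def Incident {n d : ℕ} (ℓ : Fin d → MvPolynomial (Fin (n + 1)) ℝ) (i j : Fin d) : Prop :=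
  affDim (facetOf ℓ i ∩ facetOf ℓ j) = (n : ℤ) - 2

open Classical in
/-- The flat `F_v = {i | ℓᵢ(v) = 0}`. -/
def flatOf {n d : ℕ} (ℓ : Fin d → MvPolynomial (Fin (n + 1)) ℝ) (v : Fin (n + 1) → ℝ) :
    Finset (Fin d) :=
  Finset.univ.filter fun i => eval v (ℓ i) = 0

/-- The rank `r_v`: the dimension of the linear span of `{ℓᵢ : i ∈ F_v}`. -/
def rkOf {n d : ℕ} (ℓ : Fin d → MvPolynomial (Fin (n + 1)) ℝ) (v : Fin (n + 1) → ℝ) : ℕ :=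
  Module.finrank ℝ (Submodule.span ℝ (ℓ '' (flatOf ℓ v : Set (Fin d))))

/-- The nullity `nl_v = |F_v| − r_v`; the subtraction never truncates, as `r_v ≤ |F_v|`. -/
def nlOf {n d : ℕ} (ℓ : Fin d → MvPolynomial (Fin (n + 1)) ℝ) (v : Fin (n + 1) → ℝ) : ℕ :=
  (flatOf ℓ v).card - rkOf ℓ v

/-- `P_v = {y ∈ P | ℓᵢ(1,y) = 0 for all i ∈ F_v}`, the intersection of `P` with `L_v`. -/
def faceOf {n d : ℕ} (ℓ : Fin d → MvPolynomial (Fin (n + 1)) ℝ) (v : Fin (n + 1) → ℝ) :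
    Set (Fin n → ℝ) :=
  {y ∈ polytopeOf ℓ | ∀ i ∈ flatOf ℓ v, eval (lift1 y) (ℓ i) = 0}

open Classical in
/-- The order `ord_P(L_v)`: it is `nl_v` if `dim P_v = n − r_v = dim L_v`, and `nl_v + 1`
otherwise. (For `v ≠ 0` one has `r_v ≤ n`, so an empty `P_v` falls under the second case.) -/
def ordOf {n d : ℕ} (ℓ : Fin d → MvPolynomial (Fin (n + 1)) ℝ) (v : Fin (n + 1) → ℝ) : ℕ :=
  if affDim (faceOf ℓ v) = (n : ℤ) - (rkOf ℓ v : ℤ) then nlOf ℓ v else nlOf ℓ v + 1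

/-- The ideal `I_v ⊆ ℂ[X₀,…,Xₙ]` generated by all linear forms vanishing at `v`. -/
def pointIdeal {n : ℕ} (v : Fin (n + 1) → ℝ) : Ideal (MvPolynomial (Fin (n + 1)) ℂ) :=
  Ideal.span {p | p.IsHomogeneous 1 ∧ eval (fun i => (v i : ℂ)) p = 0}

/-- A real polynomial regarded as a complex one. -/
def toC {n : ℕ} (p : MvPolynomial (Fin (n + 1)) ℝ) : MvPolynomial (Fin (n + 1)) ℂ :=
  map (algebraMap ℝ ℂ) p

end PolytopeAdjoint

end

namespace PolytopeAdjoint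

section LinearForms

variable {σ : Type*}

theorem exists_linearMap_eval_eq {R : Type*} [CommSemiring R] {p : MvPolynomial σ R}
    (hp : p.IsHomogeneous 1) : ∃ φ : (σ → R) →ₗ[R] R, ∀ x, eval x p = φ x := by
  have hspan : p ∈ Submodule.span R (Set.range X) :=
    (homogeneousSubmodule_one_eq_span_X (σ := σ) (R := R)).le hp
  clear hp
  induction hspan using Submodule.span_induction with
  | mem p hp =>
    obtain ⟨t, rfl⟩ := hp
    exact ⟨LinearMap.proj t, fun x => eval_X t⟩
  | zero => exact ⟨0, fun x => map_zero _⟩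
  | add p q _ _ hp hq =>
    obtain ⟨φ, hφ⟩ := hp
    obtain ⟨ψ, hψ⟩ := hq
    exact ⟨φ + ψ, fun x => by rw [map_add, hφ, hψ, LinearMap.add_apply]⟩
  | smul c p _ hp =>
    obtain ⟨φ, hφ⟩ := hp
    exact ⟨c • φ, fun x => by rw [smul_eval, hφ, LinearMap.smul_apply, smul_eq_mul]⟩

theorem exists_submodule_mem_iff_forall_eval_eq_zero {R : Type*} [CommSemiring R]
    {s : Set (MvPolynomial σ R)} (hs : ∀ q ∈ s, q.IsHomogeneous 1) :
    ∃ V : Submodule R (σ → R), ∀ x, x ∈ V ↔ ∀ q ∈ s, eval x q = 0 := by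
  choose L hL using fun q : s => exists_linearMap_eval_eq (hs q q.2)
  refine ⟨⨅ q : s, LinearMap.ker (L q), fun x => ?_⟩
  simp only [Submodule.mem_iInf, LinearMap.mem_ker, ← hL, Subtype.forall]

theorem eval_bind₁ {τ R : Type*} [CommSemiring R] (S : σ → MvPolynomial τ R) (x : τ → R)
    (f : MvPolynomial σ R) : eval x (bind₁ S f) = eval (fun t => eval x (S t)) f :=
  eval₂Hom_bind₁ _ _ _ _

theorem eval_eq_zero_of_mem_ideal_span {R : Type*} [CommSemiring R] {s : Set (MvPolynomial σ R)}
    {f : MvPolynomial σ R} (hf : f ∈ Ideal.span s) {x : σ → R} (hx : ∀ q ∈ s, eval x q = 0) :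
    eval x f = 0 :=
  (Ideal.span_le (I := RingHom.ker (eval x))).2 hx hf

variable {K : Type*} [Field K] {s : Set (MvPolynomial σ K)}

theorem exists_mem_span_eval_eq (hfin : s.Finite) (hs : ∀ q ∈ s, q.IsHomogeneous 1)
    {φ : (σ → K) →ₗ[K] K} (hφ : ∀ x, (∀ q ∈ s, eval x q = 0) → φ x = 0) :
    ∃ r ∈ Submodule.span K s, ∀ x, eval x r = φ x := by
  have := hfin.to_subtype
  have := Fintype.ofFinite s
  choose L hL using fun q : s => exists_linearMap_eval_eq (hs q q.2)
  have hmem : φ ∈ Submodule.span K (Set.range L) := by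
    refine mem_span_of_iInf_ker_le_ker fun x hx => hφ x fun q hq => ?_
    rw [hL ⟨q, hq⟩]
    exact (Submodule.mem_iInf _).1 hx ⟨q, hq⟩
  obtain ⟨c, rfl⟩ := (Submodule.mem_span_range_iff_exists_fun K).1 hmem
  refine ⟨∑ q : s, c q • (q : MvPolynomial σ K),
    Submodule.sum_mem _ fun q _ => Submodule.smul_mem _ _ (Submodule.subset_span q.2), fun x => ?_⟩
  simp only [map_sum, smul_eval, hL, LinearMap.sum_apply, LinearMap.smul_apply, smul_eq_mul]

variable [Infinite K]

theorem mem_span_of_forall_eval_eq_zero (hfin : s.Finite) (hs : ∀ q ∈ s, q.IsHomogeneous 1)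
    {p : MvPolynomial σ K} (hp : p.IsHomogeneous 1)
    (h : ∀ x, (∀ q ∈ s, eval x q = 0) → eval x p = 0) : p ∈ Submodule.span K s := by
  obtain ⟨φ, hφ⟩ := exists_linearMap_eval_eq hp
  obtain ⟨r, hr, hrφ⟩ := exists_mem_span_eval_eq hfin hs fun x hx => (hφ x).symm.trans (h x hx)
  obtain rfl : p = r := MvPolynomial.funext fun x => (hφ x).trans (hrφ x).symm
  exact hr

theorem finrank_span_eq_card_of_forall_eq_zero [Fintype σ] (hfin : s.Finite)
    (hs : ∀ q ∈ s, q.IsHomogeneous 1) (h : ∀ x, (∀ q ∈ s, eval x q = 0) → x = 0) :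
    Module.finrank K (Submodule.span K s) = Fintype.card σ := by
  have hspan : Submodule.span K s = homogeneousSubmodule σ K 1 := by
    refine le_antisymm (Submodule.span_le.2 hs) fun p hp =>
      mem_span_of_forall_eval_eq_zero hfin hs hp fun x hx => ?_
    obtain ⟨φ, hφ⟩ := exists_linearMap_eval_eq hp
    rw [hφ, h x hx, map_zero]
  rw [hspan, homogeneousSubmodule_one_eq_span_X, finrank_span_eq_card (linearIndependent_X σ K)]

theorem exists_substitution_onto_zeros (hfin : s.Finite) (hs : ∀ q ∈ s, q.IsHomogeneous 1) :
    ∃ S : σ → MvPolynomial σ K,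
      (∀ t, X t - S t ∈ Submodule.span K s) ∧ ∀ q ∈ s, bind₁ S q = 0 := by
  obtain ⟨V, hV⟩ := exists_submodule_mem_iff_forall_eval_eq_zero hs
  obtain ⟨π, hπ⟩ := V.subtype.exists_leftInverse_of_injective V.ker_subtype
  have hπV : ∀ x ∈ V, (π x : σ → K) = x := fun x hx =>
    congrArg Subtype.val (LinearMap.congr_fun hπ ⟨x, hx⟩)
  have hcoord : ∀ t, ∃ r ∈ Submodule.span K s, ∀ x, eval x r = x t - (π x : σ → K) t := fun t =>
    exists_mem_span_eval_eq hfin hs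
      (φ := LinearMap.proj t ∘ₗ (LinearMap.id - V.subtype ∘ₗ π)) fun x hx => by
        simp [hπV x ((hV x).2 hx)]
  choose r hr hrπ using hcoord
  refine ⟨fun t => X t - r t, fun t => by simpa only [sub_sub_cancel] using hr t, fun q hq => ?_⟩
  refine MvPolynomial.funext fun x => ?_
  have hS : (fun t => eval x (X t - r t)) = (π x : σ → K) := _root_.funext fun t => by
    rw [map_sub, eval_X, hrπ, sub_sub_cancel]
  rw [eval_bind₁, hS, (hV _).1 (π x).2 q hq, map_zero]

end LinearForms

section Substitution

variable {σ R A : Type*} [CommRing R] [CommRing A] [Algebra R A]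

theorem sub_bind₁_mem {J : Ideal (MvPolynomial σ R)} {S : σ → MvPolynomial σ R}
    (hS : ∀ t, X t - S t ∈ J) (f : MvPolynomial σ R) : f - bind₁ S f ∈ J := by
  rw [← Ideal.Quotient.eq]
  have h : Ideal.Quotient.mkₐ R J = (Ideal.Quotient.mkₐ R J).comp (bind₁ S) :=
    algHom_ext fun t => by simpa using Ideal.Quotient.eq.2 (hS t)
  exact DFunLike.congr_fun h f

theorem ker_bind₁_map_eq_span {s : Set (MvPolynomial σ R)} {S : σ → MvPolynomial σ R}
    (hX : ∀ t, X t - S t ∈ Submodule.span R s) (hs : ∀ q ∈ s, bind₁ S q = 0) :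
    RingHom.ker (bind₁ fun t => map (algebraMap R A) (S t)) =
      Ideal.span (map (algebraMap R A) '' s) := by
  refine le_antisymm (fun f hf => ?_) (Ideal.span_le.2 ?_)
  · have hX' : ∀ t, X t - map (algebraMap R A) (S t) ∈ Ideal.span (map (algebraMap R A) '' s) :=
      fun t => by
        have := Ideal.mem_map_of_mem (map (algebraMap R A))
          (Submodule.span_subset_span R (MvPolynomial σ R) s (hX t))
        rwa [map_sub, map_X, Ideal.map_span] at this
    simpa only [RingHom.mem_ker.1 hf, sub_zero] using sub_bind₁_mem hX' f
  · rintro _ ⟨q, hq, rfl⟩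
    rw [SetLike.mem_coe, RingHom.mem_ker, ← map_bind₁, hs q hq, map_zero]

theorem eval_algebraMap_map (x : σ → R) (p : MvPolynomial σ R) :
    eval (fun t => algebraMap R A (x t)) (map (algebraMap R A) p) = algebraMap R A (eval x p) :=
  (map_eval (algebraMap R A) x p).symm

theorem eq_zero_of_forall_eval_algebraMap_eq_zero [Infinite R] [IsDomain A] [FaithfulSMul R A]
    {f : MvPolynomial σ A} (h : ∀ x : σ → R, eval (fun t => algebraMap R A (x t)) f = 0) :
    f = 0 := by
  refine funext_set (fun _ => Set.range (algebraMap R A))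
    (fun _ => Set.infinite_range_of_injective (FaithfulSMul.algebraMap_injective R A))
    fun x hx => ?_
  choose y hy using fun t => hx t (Set.mem_univ t)
  obtain rfl : (fun t => algebraMap R A (y t)) = x := _root_.funext hy
  rw [h, map_zero]

end Substitution

section LinearIdeals

variable {σ K A : Type*} [Field K] [Infinite K] [CommRing A] [IsDomain A] [Algebra K A]
  {s : Set (MvPolynomial σ K)}

theorem isPrime_span_map_of_isHomogeneous_one (hfin : s.Finite)
    (hs : ∀ q ∈ s, q.IsHomogeneous 1) : (Ideal.span (map (algebraMap K A) '' s)).IsPrime := by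
  obtain ⟨S, hX, hS⟩ := exists_substitution_onto_zeros hfin hs
  rw [← ker_bind₁_map_eq_span hX hS]
  exact RingHom.ker_isPrime _

theorem mem_span_map_iff_forall_eval_eq_zero (hfin : s.Finite) (hs : ∀ q ∈ s, q.IsHomogeneous 1)
    {f : MvPolynomial σ A} :
    f ∈ Ideal.span (map (algebraMap K A) '' s) ↔
      ∀ x : σ → K, (∀ q ∈ s, eval x q = 0) → eval (fun t => algebraMap K A (x t)) f = 0 := by
  refine ⟨fun hf x hx => eval_eq_zero_of_mem_ideal_span hf ?_, fun h => ?_⟩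
  · rintro _ ⟨q, hq, rfl⟩
    rw [eval_algebraMap_map, hx q hq, map_zero]
  · obtain ⟨S, hX, hS⟩ := exists_substitution_onto_zeros hfin hs
    rw [← ker_bind₁_map_eq_span hX hS, RingHom.mem_ker]
    refine eq_zero_of_forall_eval_algebraMap_eq_zero (R := K) fun x => ?_
    have hzero : ∀ q ∈ s, eval (fun t => eval x (S t)) q = 0 := fun q hq => by
      rw [← eval_bind₁, hS q hq, map_zero]
    simpa only [eval_bind₁, eval_algebraMap_map] using h _ hzero

theorem mem_span_map_of_generic_eval_eq_zero (hfin : s.Finite) (hs : ∀ q ∈ s, q.IsHomogeneous 1)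
    {T : Finset (MvPolynomial σ K)} (hT : ∀ g ∈ T, ∃ x, (∀ q ∈ s, eval x q = 0) ∧ eval x g ≠ 0)
    {f : MvPolynomial σ A}
    (hf : ∀ x : σ → K, (∀ q ∈ s, eval x q = 0) → (∀ g ∈ T, eval x g ≠ 0) →
      eval (fun t => algebraMap K A (x t)) f = 0) :
    f ∈ Ideal.span (map (algebraMap K A) '' s) := by
  have hprime := isPrime_span_map_of_isHomogeneous_one (A := A) hfin hs
  have hmul : f * ∏ g ∈ T, map (algebraMap K A) g ∈ Ideal.span (map (algebraMap K A) '' s) := by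
    refine (mem_span_map_iff_forall_eval_eq_zero hfin hs).2 fun x hx => ?_
    rw [map_mul, map_prod]
    by_cases hxT : ∀ g ∈ T, eval x g ≠ 0
    · rw [hf x hx hxT, zero_mul]
    · push Not at hxT
      obtain ⟨g, hg, hxg⟩ := hxT
      rw [Finset.prod_eq_zero hg (by rw [eval_algebraMap_map, hxg, map_zero]), mul_zero]
  refine (hprime.mem_or_mem hmul).resolve_right fun hprod => ?_
  obtain ⟨g, hg, hgJ⟩ := hprime.prod_mem_iff.1 hprod
  obtain ⟨x, hx, hxg⟩ := hT g hg
  have hgx := (mem_span_map_iff_forall_eval_eq_zero hfin hs).1 hgJ x hx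
  rw [eval_algebraMap_map] at hgx
  exact hxg ((map_eq_zero_iff _ (FaithfulSMul.algebraMap_injective K A)).1 hgx)

end LinearIdeals

theorem finrank_span_pair {K M : Type*} [DivisionRing K] [AddCommGroup M] [Module K M] {a b : M}
    (h : LinearIndependent K ![a, b]) : Module.finrank K (Submodule.span K {a, b}) = 2 := by
  rw [← Matrix.range_cons_cons_empty a b ![], finrank_span_eq_card h, Fintype.card_fin]

section Facets

variable {n d : ℕ} {ℓ : Fin d → MvPolynomial (Fin (n + 1)) ℝ} {i j : Fin d}

theorem eval_eq_zero_of_mem_pointIdeal {v : Fin (n + 1) → ℝ} {f : MvPolynomial (Fin (n + 1)) ℂ}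
    (hf : f ∈ pointIdeal v) : eval (fun t => (v t : ℂ)) f = 0 :=
  eval_eq_zero_of_mem_ideal_span hf fun _ hq => hq.2

theorem exists_ne_zero_of_not_incident (hi : (ℓ i).IsHomogeneous 1) (hj : (ℓ j).IsHomogeneous 1)
    (hij : LinearIndependent ℝ ![ℓ i, ℓ j]) (hni : ¬ Incident ℓ i j) :
    ∃ v ≠ 0, ∀ q ∈ ({ℓ i, ℓ j} : Set _), eval v q = 0 := by
  by_contra! h
  have hzero : ∀ v, (∀ q ∈ ({ℓ i, ℓ j} : Set _), eval v q = 0) → v = 0 := fun v hv => by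
    by_contra hv0
    obtain ⟨q, hq, hvq⟩ := h v hv0
    exact hvq (hv q hq)
  have hn : 2 = n + 1 := by
    rw [← finrank_span_pair hij, finrank_span_eq_card_of_forall_eq_zero (Set.toFinite _)
      (by simp [hi, hj]) hzero, Fintype.card_fin]
  have hempty : facetOf ℓ i ∩ facetOf ℓ j = ∅ := by
    refine Set.eq_empty_of_forall_notMem fun y ⟨hyi, hyj⟩ => ?_
    have h0 : lift1 y = 0 := hzero _ (by simp [hyi.2, hyj.2])
    simpa [lift1] using congrFun h0 0
  apply hni
  rw [Incident, hempty, affDim, if_neg Set.not_nonempty_empty]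
  omega

theorem span_flatOf_eq_span_pair {v : Fin (n + 1) → ℝ} (hi : eval v (ℓ i) = 0)
    (hj : eval v (ℓ j) = 0) (hflat : ∀ k ∈ flatOf ℓ v, ℓ k ∈ Submodule.span ℝ {ℓ i, ℓ j}) :
    Submodule.span ℝ (ℓ '' (flatOf ℓ v : Set (Fin d))) = Submodule.span ℝ {ℓ i, ℓ j} := by
  refine le_antisymm (Submodule.span_le.2 (Set.image_subset_iff.2 hflat)) (Submodule.span_mono ?_)
  rintro _ (rfl | rfl)
  exacts [⟨i, by simp [flatOf, hi], rfl⟩, ⟨j, by simp [flatOf, hj], rfl⟩]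

theorem faceOf_eq_facetOf_inter_facetOf {v : Fin (n + 1) → ℝ} (hi : eval v (ℓ i) = 0)
    (hj : eval v (ℓ j) = 0) (hflat : ∀ k ∈ flatOf ℓ v, ℓ k ∈ Submodule.span ℝ {ℓ i, ℓ j}) :
    faceOf ℓ v = facetOf ℓ i ∩ facetOf ℓ j := by
  refine Set.Subset.antisymm (fun y hy => ?_) fun y ⟨⟨hyP, hyi⟩, _, hyj⟩ => ⟨hyP, fun k hk => ?_⟩
  · exact ⟨⟨hy.1, hy.2 i (by simp [flatOf, hi])⟩, hy.1, hy.2 j (by simp [flatOf, hj])⟩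
  · obtain ⟨a, b, hab⟩ := Submodule.mem_span_pair.1 (hflat k hk)
    rw [← hab, map_add, smul_eval, smul_eval, hyi, hyj, mul_zero, mul_zero, add_zero]

theorem ordOf_ne_zero_of_not_incident (hij : LinearIndependent ℝ ![ℓ i, ℓ j])
    (hni : ¬ Incident ℓ i j) {v : Fin (n + 1) → ℝ} (hi : eval v (ℓ i) = 0)
    (hj : eval v (ℓ j) = 0) (hflat : ∀ k ∈ flatOf ℓ v, ℓ k ∈ Submodule.span ℝ {ℓ i, ℓ j}) :
    ordOf ℓ v ≠ 0 := by
  have hrk : rkOf ℓ v = 2 := by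
    rw [rkOf, span_flatOf_eq_span_pair hi hj hflat, finrank_span_pair hij]
  have hdim : affDim (faceOf ℓ v) ≠ (n : ℤ) - (rkOf ℓ v : ℤ) := by
    rw [faceOf_eq_facetOf_inter_facetOf hi hj hflat, hrk]
    exact hni
  rw [ordOf, if_neg hdim]
  exact Nat.succ_ne_zero _

end Facets

end PolytopeAdjoint

open PolytopeAdjoint in
theorem adjoint_vanishes_on_nonincident_intersection_general {n d : ℕ}
    (ℓ : Fin d → MvPolynomial (Fin (n + 1)) ℝ) (hℓ : ∀ k, (ℓ k).IsHomogeneous 1)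
    (f : MvPolynomial (Fin (n + 1)) ℂ)
    (hvan : ∀ v : Fin (n + 1) → ℝ, v ≠ 0 → ordOf ℓ v ≠ 0 → eval (fun t => (v t : ℂ)) f = 0)
    (i j : Fin d) (hij : LinearIndependent ℝ ![ℓ i, ℓ j]) (hni : ¬ Incident ℓ i j) :
    f ∈ Ideal.span {toC (ℓ i), toC (ℓ j)} ∧
      ∀ w : Fin (n + 1) → ℂ, eval w (toC (ℓ i)) = 0 → eval w (toC (ℓ j)) = 0 → eval w f = 0 := by
  classical
  have hfin : ({ℓ i, ℓ j} : Set (MvPolynomial (Fin (n + 1)) ℝ)).Finite := Set.toFinite _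
  have hs : ∀ q ∈ ({ℓ i, ℓ j} : Set _), q.IsHomogeneous 1 := by simp [hℓ]
  obtain ⟨v₀, hv₀, hv₀s⟩ := exists_ne_zero_of_not_incident (hℓ i) (hℓ j) hij hni
  obtain ⟨t₀, ht₀⟩ := Function.ne_iff.1 hv₀
  -- The factor `X t₀` excludes `v = 0`, where nothing is known about `f`.
  let T : Finset (MvPolynomial (Fin (n + 1)) ℝ) :=
    insert (X t₀) (Finset.image ℓ {k | ℓ k ∉ Submodule.span ℝ {ℓ i, ℓ j}})
  have hT : ∀ g ∈ T, ∃ x, (∀ q ∈ ({ℓ i, ℓ j} : Set _), eval x q = 0) ∧ eval x g ≠ 0 := by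
    simp only [T, Finset.forall_mem_insert, Finset.forall_mem_image]
    refine ⟨⟨v₀, hv₀s, by rwa [eval_X]⟩, fun k hk => ?_⟩
    by_contra! h
    exact (Finset.mem_filter.1 hk).2 (mem_span_of_forall_eval_eq_zero hfin hs (hℓ k) h)
  have hmem : f ∈ Ideal.span {toC (ℓ i), toC (ℓ j)} := by
    rw [toC, toC, ← Set.image_pair]
    refine mem_span_map_of_generic_eval_eq_zero hfin hs hT fun v hv hvT => ?_
    refine hvan v (fun hv0 => hvT (X t₀) (Finset.mem_insert_self _ _) (by simp [hv0])) ?_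
    refine ordOf_ne_zero_of_not_incident hij hni (hv _ (.inl rfl)) (hv _ (.inr rfl)) fun k hk => ?_
    by_contra hkspan
    exact hvT (ℓ k) (Finset.mem_insert_of_mem (Finset.mem_image_of_mem ℓ (by simpa using hkspan)))
      (by simpa [flatOf] using hk)
  exact ⟨hmem, fun w hi hj => eval_eq_zero_of_mem_ideal_span hmem (by simp [hi, hj])⟩

theorem adjoint_vanishes_on_nonincident_intersection {n d D : ℕ} (hn : 1 ≤ n)
    (ℓ : Fin d → MvPolynomial (Fin (n + 1)) ℝ) (hP : PolytopeAdjoint.IsFacetSystem ℓ)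
    (f : MvPolynomial (Fin (n + 1)) ℂ) (hD : D + (n + 1) = d) (hf : f.IsHomogeneous D)
    (hvan : ∀ v : Fin (n + 1) → ℝ, v ≠ 0 →
      f ∈ PolytopeAdjoint.pointIdeal v ^ PolytopeAdjoint.ordOf ℓ v)
    (i j : Fin d) (hij : i ≠ j) (hni : ¬ PolytopeAdjoint.Incident ℓ i j) :
    f ∈ Ideal.span {PolytopeAdjoint.toC (ℓ i), PolytopeAdjoint.toC (ℓ j)} ∧
      ∀ w : Fin (n + 1) → ℂ,
        MvPolynomial.eval w (PolytopeAdjoint.toC (ℓ i)) = 0 →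
        MvPolynomial.eval w (PolytopeAdjoint.toC (ℓ j)) = 0 →
        MvPolynomial.eval w f = 0 :=
  adjoint_vanishes_on_nonincident_intersection_general ℓ hP.homogeneous f
    (fun v hv hord => PolytopeAdjoint.eval_eq_zero_of_mem_pointIdeal
      (Ideal.pow_le_self hord (hvan v hv)))
    i j ((LinearIndependent.pair_iff' (hP.ne_zero i)).2 (hP.not_proportional i j hij)) hni
end

section
/- Let $K$ be a field, let $k \ge 1$ be an integer, let $f \in K[X_0, \dots, X_n]$ be homogeneous of degree $D$, let $\ell$ be a nonzero homogeneous polynomial of degree $1$, and let $\ell_1, \dots, \ell_k$ be homogeneous polynomials of degree $1$ such that for each $i$ the pair $(\ell, \ell_i)$ is linearly independent, and for $i \ne j$ the linear spans of $\{\ell, \ell_i\}$ and $\{\ell, \ell_j\}$ are distinct (so the $\ell_i$ cut out $k$ pairwise distinct hyperplanes inside the hyperplane $L = \{\ell = 0\}$). Suppose $m \ge 1$ and $\mu_1, \dots, \mu_k$ are natural numbers (possibly $0$) such that $f$ lies in the $\mu_i$-th power $(\ell, \ell_i)^{\mu_i}$ of the ideal generated by $\ell$ and $\ell_i$ for every $i$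 and, as integers, $\sum_{i=1}^{k} (\mu_i - (m - 1)) > D - (m - 1)$. Then $\ell^m$ divides $f$, i.e. $f$ vanishes to order at least $m$ along $L$. -/
/-!
Induct on the order of vanishing: suppose `f = ℓ ^ j * g` with `j < m`. Since `ℓ` is prime and does
not divide `ℓᵢ`, it can be cancelled from the powers of `(ℓ, ℓᵢ)`, so `g ∈ (ℓ, ℓᵢ) ^ (μᵢ - j)`.
Eliminating a variable that occurs in `ℓ` restricts `g` to the hyperplane `ℓ = 0`, where it becomes
divisible by `ℓᵢ ^ (μᵢ - j)` for every `i`. The restricted `ℓᵢ` are pairwise non-proportional linear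
forms and `∑ (μᵢ - j)` exceeds the degree of `g`, so `g` restricts to zero, that is, `ℓ ∣ g`.
-/

lemma sub_lt_sum_sub_of_le {ι G : Type*} [Fintype ι] [Nonempty ι] [AddCommGroup G]
    [PartialOrder G] [IsOrderedAddMonoid G] {x c c' : G} {w : ι → G} (hc : c' ≤ c)
    (h : x - c < ∑ i, (w i - c)) : x - c' < ∑ i, (w i - c') := by
  have hle : c - c' ≤ ∑ _i : ι, (c - c') :=
    Finset.single_le_sum (f := fun _ ↦ c - c') (fun _ _ ↦ sub_nonneg.mpr hc)
      (Finset.mem_univ (Classical.arbitrary ι))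
  calc x - c' = x - c + (c - c') := by abel
    _ < ∑ i, (w i - c) + ∑ _i : ι, (c - c') := add_lt_add_of_lt_of_le h hle
    _ = ∑ i, (w i - c') := by simp only [← Finset.sum_add_distrib, sub_add_sub_cancel]

section Ideals

lemma sup_pow_succ_eq {R : Type*} [CommSemiring R] (I J : Ideal R) (n : ℕ) :
    (I ⊔ J) ^ (n + 1) = I * (I ⊔ J) ^ n ⊔ J ^ (n + 1) := by
  induction n with
  | zero => simp
  | succ n ih =>
    have hIJ : I * (J * (I ⊔ J) ^ n) ≤ I * (I ⊔ J) ^ (n + 1) := by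
      rw [pow_succ' (I ⊔ J)]
      gcongr
      exact le_sup_right
    calc (I ⊔ J) ^ (n + 2)
        = I * (I ⊔ J) ^ (n + 1) ⊔ J * (I * (I ⊔ J) ^ n ⊔ J ^ (n + 1)) := by
          rw [← ih, ← Ideal.sup_mul, pow_succ']
      _ = I * (I ⊔ J) ^ (n + 1) ⊔ (I * (J * (I ⊔ J) ^ n) ⊔ J ^ (n + 2)) := by
          rw [Ideal.mul_sup, mul_left_comm, ← pow_succ']
      _ = I * (I ⊔ J) ^ (n + 1) ⊔ J ^ (n + 2) := by
          rw [← sup_assoc, sup_eq_left.mpr hIJ]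

variable {R : Type*} [CommRing R] [IsDomain R] {x y g : R}

lemma mem_span_pair_pow_of_mul_mem (hx : Prime x) (hxy : ¬ x ∣ y) {n : ℕ}
    (h : x * g ∈ Ideal.span {x, y} ^ (n + 1)) : g ∈ Ideal.span {x, y} ^ n := by
  rw [Ideal.span_insert, sup_pow_succ_eq, Ideal.span_singleton_pow, Submodule.mem_sup] at h
  obtain ⟨p, hp, q, hq, hpq⟩ := h
  obtain ⟨u, hu, rfl⟩ := Ideal.mem_span_singleton_mul.mp hp
  obtain ⟨v, rfl⟩ := Ideal.mem_span_singleton.mp hq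
  have hxv : x ∣ y ^ (n + 1) * v := (dvd_add_right (dvd_mul_right x u)).mp ⟨g, hpq⟩
  obtain ⟨w, rfl⟩ := (hx.dvd_or_dvd hxv).resolve_left fun h ↦ hxy (hx.dvd_of_dvd_pow h)
  obtain rfl : u + y ^ (n + 1) * w = g := mul_left_cancel₀ hx.ne_zero (by linear_combination hpq)
  have hy : y ^ (n + 1) ∈ Ideal.span {x, y} ^ n :=
    Ideal.pow_le_pow_right n.le_succ (Ideal.pow_mem_pow (Ideal.subset_span (by simp)) _)
  rw [← Ideal.span_insert] at hu
  exact add_mem hu (Ideal.mul_mem_right w _ hy)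

lemma mem_span_pair_pow_of_pow_mul_mem (hx : Prime x) (hxy : ¬ x ∣ y) {j n : ℕ}
    (h : x ^ j * g ∈ Ideal.span {x, y} ^ n) : g ∈ Ideal.span {x, y} ^ (n - j) := by
  induction j generalizing n with
  | zero => simpa using h
  | succ j ih =>
    cases n with
    | zero => simp
    | succ n =>
      rw [pow_succ' x, mul_assoc] at h
      rw [Nat.add_sub_add_right]
      exact ih (mem_span_pair_pow_of_mul_mem hx hxy h)

end Ideals

lemma pow_dvd_map_of_mem_span_pair_pow {R S F : Type*} [CommSemiring R] [CommSemiring S]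
    [FunLike F R S] [RingHomClass F R S] (φ : F) {x y g : R} (hx : φ x = 0) {n : ℕ}
    (h : g ∈ Ideal.span {x, y} ^ n) : φ y ^ n ∣ φ g := by
  have hφ := Ideal.mem_map_of_mem φ h
  rwa [Ideal.map_pow, Ideal.map_span, Set.image_pair, hx, Ideal.span_insert_zero,
    Ideal.span_singleton_pow, Ideal.mem_span_singleton] at hφ

lemma span_pair_smul_add_smul {K M : Type*} [DivisionRing K] [AddCommGroup M] [Module K M]
    (x y : M) (d : K) {c : K} (hc : c ≠ 0) :
    Submodule.span K {x, d • x + c • y} = Submodule.span K {x, y} := by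
  apply le_antisymm <;> rw [Submodule.span_le, Set.pair_subset_iff] <;>
    refine ⟨Submodule.subset_span (by simp), ?_⟩ <;>
    rw [SetLike.mem_coe, Submodule.mem_span_pair]
  · exact ⟨d, c, rfl⟩
  · exact ⟨-(c⁻¹ * d), c⁻¹, by simp [smul_smul, hc]⟩

open MvPolynomial in
lemma totalDegree_aeval_le {σ τ R S : Type*} [CommSemiring R] [CommSemiring S] [Algebra R S]
    {x : σ → MvPolynomial τ S} {n : ℕ} (hx : ∀ t, (x t).totalDegree ≤ n)
    (p : MvPolynomial σ R) : (aeval x p).totalDegree ≤ p.totalDegree * n := by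
  rw [aeval_def, eval₂_eq]
  refine totalDegree_finsetSum_le fun d hd ↦ ?_
  calc (algebraMap R (MvPolynomial τ S) (coeff d p) * ∏ t ∈ d.support, x t ^ d t).totalDegree
      ≤ (∏ t ∈ d.support, x t ^ d t).totalDegree := by
        rw [← Algebra.smul_def]
        exact totalDegree_smul_le _ _
    _ ≤ ∑ t ∈ d.support, (x t ^ d t).totalDegree := totalDegree_finsetProd _ _
    _ ≤ ∑ t ∈ d.support, d t * n := Finset.sum_le_sum fun t _ ↦
        (totalDegree_pow _ _).trans (Nat.mul_le_mul_left _ (hx t))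
    _ = (∑ t ∈ d.support, d t) * n := (Finset.sum_mul ..).symm
    _ ≤ p.totalDegree * n := Nat.mul_le_mul_right n (le_totalDegree hd)

section LinearForms

open MvPolynomial

lemma exists_coeff_single_ne_zero_of_isHomogeneous_one {σ R : Type*} [CommSemiring R]
    {ℓ : MvPolynomial σ R} (hℓ : ℓ.IsHomogeneous 1) (hℓ0 : ℓ ≠ 0) :
    ∃ s, coeff (Finsupp.single s 1) ℓ ≠ 0 := by
  obtain ⟨d, hd⟩ := ne_zero_iff.mp hℓ0
  have hdeg : d.degree = 1 := by_contra fun h ↦ hd (hℓ.coeff_eq_zero h)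
  obtain ⟨s, rfl⟩ := (Finsupp.sum_eq_one_iff d).mp hdeg
  exact ⟨s, hd⟩

lemma exists_smul_eq_of_dvd_of_isHomogeneous_one {σ R : Type*} [CommSemiring R]
    [NoZeroDivisors R] {a b : MvPolynomial σ R} (ha : a.IsHomogeneous 1)
    (hb : b.IsHomogeneous 1) (hb0 : b ≠ 0) (h : a ∣ b) : ∃ c : R, c ≠ 0 ∧ b = c • a := by
  obtain ⟨q, rfl⟩ := h
  obtain ⟨ha0, hq0⟩ := mul_ne_zero_iff.mp hb0
  have hdeg := totalDegree_mul_of_isDomain ha0 hq0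
  rw [hb.totalDegree hb0, ha.totalDegree ha0] at hdeg
  have hq : q = C (coeff 0 q) := totalDegree_eq_zero_iff_eq_C.mp (by lia)
  refine ⟨coeff 0 q, fun h ↦ hq0 (by rw [hq, h, C_0]), ?_⟩
  rw [smul_eq_C_mul, ← hq, mul_comm]

lemma not_dvd_of_linearIndependent {σ R : Type*} [CommRing R] [IsDomain R]
    {a b : MvPolynomial σ R} (ha : a.IsHomogeneous 1) (hb : b.IsHomogeneous 1)
    (h : LinearIndependent R ![a, b]) : ¬ a ∣ b := fun hdvd ↦ by
  obtain ⟨c, -, rfl⟩ := exists_smul_eq_of_dvd_of_isHomogeneous_one ha hb (h.ne_zero 1) hdvd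
  simpa using LinearIndependent.pair_iff.mp h c (-1) (by module)

variable {σ K : Type*} [Field K] {ℓ a b : MvPolynomial σ K}

lemma prime_of_isHomogeneous_one (hℓ : ℓ.IsHomogeneous 1) (hℓ0 : ℓ ≠ 0) : Prime ℓ := by
  refine (irreducible_of_totalDegree_eq_one (hℓ.totalDegree hℓ0) fun x hx ↦ ?_).prime
  obtain ⟨d, hd⟩ := ne_zero_iff.mp hℓ0
  exact isUnit_iff_ne_zero.mpr fun h ↦ hd (zero_dvd_iff.mp (h ▸ hx d))

lemma eq_zero_of_forall_pow_dvd_of_totalDegree_lt {ι : Type*} [Fintype ι]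
    {f : MvPolynomial σ K} {a : ι → MvPolynomial σ K} {ν : ι → ℕ}
    (ha : ∀ i, (a i).IsHomogeneous 1) (ha0 : ∀ i, a i ≠ 0)
    (hdvd : Pairwise fun i j ↦ ¬ a i ∣ a j) (hν : ∀ i, a i ^ ν i ∣ f)
    (hdeg : f.totalDegree < ∑ i, ν i) : f = 0 := by
  by_contra hf0
  have hprod : ∏ i, a i ^ ν i ∣ f := Fintype.prod_dvd_of_isRelPrime (fun i j hij ↦
    ((prime_of_isHomogeneous_one (ha i) (ha0 i)).irreducible.isRelPrime_iff_not_dvd.mpr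
      (hdvd hij)).pow) hν
  have hhom : (∏ i, a i ^ ν i).IsHomogeneous (∑ i, ν i) :=
    IsHomogeneous.prod _ _ _ fun i _ ↦ by simpa only [one_mul] using (ha i).pow (ν i)
  have hle := totalDegree_le_of_dvd_of_isDomain hprod hf0
  rw [hhom.totalDegree (Finset.prod_ne_zero_iff.mpr fun i _ ↦ pow_ne_zero _ (ha0 i))] at hle
  exact hdeg.not_ge hle

/-- Restriction of polynomials to the hyperplane `ℓ = 0`, for a linear form `ℓ` in which the
variable `X s` occurs. The coordinate ring of the hyperplane is realised inside `K[X]` by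
eliminating `X s`: with `c` the coefficient of `X s` in `ℓ`, this is the substitution
`X s ↦ X s - c⁻¹ ℓ` fixing all other variables. -/
noncomputable def hyperplaneRestriction (ℓ : MvPolynomial σ K) (s : σ) :
    MvPolynomial σ K →ₐ[K] MvPolynomial σ K :=
  aeval fun t ↦
    X t - (coeff (Finsupp.single s 1) (X t : MvPolynomial σ K) / coeff (Finsupp.single s 1) ℓ) • ℓ

namespace hyperplaneRestriction

variable {s : σ}

lemma apply_of_isHomogeneous_one (ℓ : MvPolynomial σ K) (s : σ) (ha : a.IsHomogeneous 1) :
    hyperplaneRestriction ℓ s a =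
      a - (coeff (Finsupp.single s 1) a / coeff (Finsupp.single s 1) ℓ) • ℓ := by
  rw [← mem_homogeneousSubmodule, homogeneousSubmodule_one_eq_span_X] at ha
  induction ha using Submodule.span_induction with
  | mem p hp =>
    obtain ⟨t, rfl⟩ := hp
    exact aeval_X _ t
  | zero => simp
  | add p q _ _ hp hq =>
    rw [map_add, hp, hq, coeff_add]
    module
  | smul c p _ hp =>
    rw [map_smul, hp, coeff_smul]
    module

lemma isHomogeneous_one (hℓ : ℓ.IsHomogeneous 1) (ha : a.IsHomogeneous 1) :
    (hyperplaneRestriction ℓ s a).IsHomogeneous 1 := by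
  rw [apply_of_isHomogeneous_one ℓ s ha]
  exact ha.sub ((homogeneousSubmodule σ K 1).smul_mem _ hℓ)

lemma totalDegree_le (hℓ : ℓ.IsHomogeneous 1) (p : MvPolynomial σ K) :
    (hyperplaneRestriction ℓ s p).totalDegree ≤ p.totalDegree :=
  (totalDegree_aeval_le (fun t ↦ ((isHomogeneous_X K t).sub
    ((homogeneousSubmodule σ K 1).smul_mem _ hℓ)).totalDegree_le) p).trans_eq (mul_one _)

lemma dvd_sub_apply (ℓ : MvPolynomial σ K) (s : σ) (p : MvPolynomial σ K) :
    ℓ ∣ p - hyperplaneRestriction ℓ s p := by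
  have hmk : (Ideal.Quotient.mkₐ K (Ideal.span {ℓ})).comp (hyperplaneRestriction ℓ s) =
      Ideal.Quotient.mkₐ K (Ideal.span {ℓ}) := by
    ext t
    have hmk_ℓ : Ideal.Quotient.mk (Ideal.span {ℓ}) ℓ = 0 :=
      Ideal.Quotient.eq_zero_iff_mem.mpr (Ideal.mem_span_singleton_self ℓ)
    simp [hyperplaneRestriction, smul_eq_C_mul, hmk_ℓ]
  rw [← Ideal.mem_span_singleton, ← Ideal.Quotient.mk_eq_mk_iff_sub_mem]
  exact (DFunLike.congr_fun hmk p).symm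

lemma apply_self (hℓ : ℓ.IsHomogeneous 1) (hs : coeff (Finsupp.single s 1) ℓ ≠ 0) :
    hyperplaneRestriction ℓ s ℓ = 0 := by
  rw [apply_of_isHomogeneous_one ℓ s hℓ, div_self hs, one_smul, sub_self]

lemma eq_zero_iff_dvd (hℓ : ℓ.IsHomogeneous 1) (hs : coeff (Finsupp.single s 1) ℓ ≠ 0)
    {p : MvPolynomial σ K} : hyperplaneRestriction ℓ s p = 0 ↔ ℓ ∣ p := by
  refine ⟨fun h ↦ by simpa only [h, sub_zero] using dvd_sub_apply ℓ s p, ?_⟩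
  rintro ⟨q, rfl⟩
  rw [map_mul, apply_self hℓ hs, zero_mul]

lemma span_pair_eq_of_dvd (hℓ : ℓ.IsHomogeneous 1) (ha : a.IsHomogeneous 1)
    (hb : b.IsHomogeneous 1) (hb0 : hyperplaneRestriction ℓ s b ≠ 0)
    (h : hyperplaneRestriction ℓ s a ∣ hyperplaneRestriction ℓ s b) :
    Submodule.span K {ℓ, a} = Submodule.span K {ℓ, b} := by
  obtain ⟨c, hc, hcab⟩ := exists_smul_eq_of_dvd_of_isHomogeneous_one
    (isHomogeneous_one hℓ ha) (isHomogeneous_one hℓ hb) hb0 h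
  rw [apply_of_isHomogeneous_one ℓ s ha, apply_of_isHomogeneous_one ℓ s hb] at hcab
  set α := coeff (Finsupp.single s 1) a / coeff (Finsupp.single s 1) ℓ
  set β := coeff (Finsupp.single s 1) b / coeff (Finsupp.single s 1) ℓ
  have hb_eq : b = (β - c * α) • ℓ + c • a := by
    rw [sub_eq_iff_eq_add.mp hcab]
    module
  rw [hb_eq, span_pair_smul_add_smul ℓ a _ hc]

end hyperplaneRestriction

section Configuration

variable {ι : Type*} [Fintype ι] {L : ι → MvPolynomial σ K}

theorem dvd_of_mem_span_pair_pow_of_totalDegree_lt (hℓ : ℓ.IsHomogeneous 1) (hℓ0 : ℓ ≠ 0)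
    (hL : ∀ i, (L i).IsHomogeneous 1) (hindep : ∀ i, LinearIndependent K ![ℓ, L i])
    (hdist : Pairwise fun i j ↦ Submodule.span K {ℓ, L i} ≠ Submodule.span K {ℓ, L j})
    {g : MvPolynomial σ K} {ν : ι → ℕ} (hmem : ∀ i, g ∈ Ideal.span {ℓ, L i} ^ ν i)
    (hdeg : g.totalDegree < ∑ i, ν i) : ℓ ∣ g := by
  obtain ⟨s, hs⟩ := exists_coeff_single_ne_zero_of_isHomogeneous_one hℓ hℓ0
  have hL0 (i : ι) : hyperplaneRestriction ℓ s (L i) ≠ 0 :=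
    (hyperplaneRestriction.eq_zero_iff_dvd hℓ hs).not.mpr
      (not_dvd_of_linearIndependent hℓ (hL i) (hindep i))
  rw [← hyperplaneRestriction.eq_zero_iff_dvd hℓ hs]
  exact eq_zero_of_forall_pow_dvd_of_totalDegree_lt
    (fun i ↦ hyperplaneRestriction.isHomogeneous_one hℓ (hL i)) hL0
    (fun i j hij h ↦ hdist hij
      (hyperplaneRestriction.span_pair_eq_of_dvd hℓ (hL i) (hL j) (hL0 j) h))
    (fun i ↦ pow_dvd_map_of_mem_span_pair_pow _ (hyperplaneRestriction.apply_self hℓ hs) (hmem i))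
    ((hyperplaneRestriction.totalDegree_le hℓ g).trans_lt hdeg)

theorem vanishing_order_along_hyperplane_general [Nonempty ι] (hℓ : ℓ.IsHomogeneous 1)
    (hL : ∀ i, (L i).IsHomogeneous 1) (hindep : ∀ i, LinearIndependent K ![ℓ, L i])
    (hdist : Pairwise fun i j ↦ Submodule.span K {ℓ, L i} ≠ Submodule.span K {ℓ, L j})
    {f : MvPolynomial σ K} {m : ℕ} {μ : ι → ℕ} (hmem : ∀ i, f ∈ Ideal.span {ℓ, L i} ^ μ i)
    (hsum : (f.totalDegree : ℤ) - ((m : ℤ) - 1) < ∑ i, ((μ i : ℤ) - ((m : ℤ) - 1))) :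
    ℓ ^ m ∣ f := by
  have hℓ0 : ℓ ≠ 0 := (hindep (Classical.arbitrary ι)).ne_zero 0
  suffices ∀ j ≤ m, ℓ ^ j ∣ f from this m le_rfl
  intro j hj
  induction j with
  | zero => simp
  | succ j ih =>
    obtain ⟨g, rfl⟩ := ih (by lia)
    obtain rfl | hg0 := eq_or_ne g 0
    · simp
    have hdeg : (ℓ ^ j * g).totalDegree = j + g.totalDegree := by
      rw [totalDegree_mul_of_isDomain (pow_ne_zero j hℓ0) hg0,
        (hℓ.pow j).totalDegree (pow_ne_zero j hℓ0), one_mul]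
    have hdeg_lt : g.totalDegree < ∑ i, (μ i - j) := by
      have hsum_j := sub_lt_sum_sub_of_le (by lia : (j : ℤ) ≤ m - 1) hsum
      have htrunc : ∑ i, ((μ i : ℤ) - j) ≤ ∑ i, ((μ i - j : ℕ) : ℤ) :=
        Finset.sum_le_sum fun i _ ↦ by lia
      zify
      lia
    rw [pow_succ]
    exact mul_dvd_mul_left _ (dvd_of_mem_span_pair_pow_of_totalDegree_lt hℓ hℓ0 hL hindep hdist
      (fun i ↦ mem_span_pair_pow_of_pow_mul_mem (prime_of_isHomogeneous_one hℓ hℓ0)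
        (not_dvd_of_linearIndependent hℓ (hL i) (hindep i)) (hmem i)) hdeg_lt)

end Configuration

end LinearForms

/-- Let `k ≥ 1`, let `f` be homogeneous of degree `D`, `ℓ` a nonzero linear form, and
`ℓ₁, …, ℓ_k` linear forms such that each pair `(ℓ, ℓᵢ)` is linearly independent and for
`i ≠ j` the spans of `{ℓ, ℓᵢ}` and `{ℓ, ℓⱼ}` are distinct. If `m ≥ 1` and
`f ∈ (ℓ, ℓᵢ)^{μᵢ}` for all `i` with `∑ᵢ (μᵢ − (m−1)) > D − (m−1)` (as integers), then
`ℓ^m ∣ f`, i.e. `f` vanishes to order at least `m` along the hyperplane `ℓ = 0`. -/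
theorem vanishing_order_along_hyperplane {K : Type*} [Field K] {n D k : ℕ} (hk : 1 ≤ k)
    (f : MvPolynomial (Fin (n + 1)) K) (hf : f.IsHomogeneous D)
    (ℓ : MvPolynomial (Fin (n + 1)) K) (hℓ : ℓ.IsHomogeneous 1) (hℓ0 : ℓ ≠ 0)
    (L : Fin k → MvPolynomial (Fin (n + 1)) K)
    (hLhom : ∀ i, (L i).IsHomogeneous 1)
    (hindep : ∀ i, LinearIndependent K ![ℓ, L i])
    (hdist : ∀ i j, i ≠ j →
      (Submodule.span K {ℓ, L i} : Submodule K (MvPolynomial (Fin (n + 1)) K)) ≠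
        Submodule.span K {ℓ, L j})
    (m : ℕ) (hm : 1 ≤ m) (μ : Fin k → ℕ)
    (hmem : ∀ i, f ∈ (Ideal.span {ℓ, L i} : Ideal (MvPolynomial (Fin (n + 1)) K)) ^ μ i)
    (hsum : (D : ℤ) - ((m : ℤ) - 1) < ∑ i, ((μ i : ℤ) - ((m : ℤ) - 1))) :
    ℓ ^ m ∣ f := by
  have : Nonempty (Fin k) := ⟨⟨0, hk⟩⟩
  exact vanishing_order_along_hyperplane_general hℓ hLhom hindep hdist hmem
    (by have := hf.totalDegree_le; lia)
end
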